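/- arXiv:1810.12334 — 14 statements merged into one kernel-verified Lean document; each statement's English description precedes it below -/
import Mathlib

section
/- Let N ≥ 3 be an integer and f : ℝ × ℝ^N → ℝ. Assume: (existence of local solutions with arbitrary initial data) for every x₀ ∈ ℝ and every (u₀,…,u_{N−1}) ∈ ℝ^N there is an open interval I containing x₀ and a solution y on I with y^{(j)}(x₀) = u_j for all 0 ≤ j ≤ N−1; (invariance of the solution set) whenever y is a solution on an open interval I, then for every c ∈ ℝ and every integer 0 ≤ a ≤ N−1 the function x ↦ y(x) + c·x^a is a solution on I, for every c ∈ ℝ the function x ↦ y(x+c) is a solution on the translated interval I − c, and for every λ ≠ 0 the function x ↦ λ·y(x) is a solution on I. Then f is identically zero, i.e. the equation is y^{(N)} = 0. (This is the uniqueness-of-invariant-hypersurface part of Theorem 3.4: y^{(N)} = 0 is the only equation of the form y^{(N)} = f(x, y, y', …, y^{(N−1)}) invariant under the symmetry algebra of y^{(N)} = 0.) -/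
/-- `y` is a solution of `y⁽ᴺ⁾ = f(x, y, y', …, y⁽ᴺ⁻¹⁾)` on the set `I`. -/
def IsSolutionN (N : ℕ) (f : ℝ × (Fin N → ℝ) → ℝ) (y : ℝ → ℝ) (I : Set ℝ) : Prop :=
  (∀ x ∈ I, ∀ j < N, DifferentiableAt ℝ (deriv^[j] y) x) ∧
  ∀ x ∈ I, deriv^[N] y x = f (x, fun j => deriv^[(j : ℕ)] y x)

/-- `I` is an open interval of `ℝ`. -/
def IsOpenInterval (I : Set ℝ) : Prop := IsOpen I ∧ I.OrdConnected

theorem aux_pow (c : ℝ) (a j : ℕ) : deriv^[j] (fun x : ℝ => c * x ^ a) =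
    fun x => c * ((a.descFactorial j : ℝ) * x ^ (a - j)) := by
  induction j with
  | zero => simp
  | succ j ih =>
    rw [Function.iterate_succ_apply', ih]
    funext x
    rw [deriv_const_mul_field, deriv_const_mul_field]
    simp only [deriv_pow_field, Nat.descFactorial_succ]
    push_cast
    rw [Nat.sub_sub]
    ring

theorem aux_smul (l : ℝ) (y : ℝ → ℝ) (j : ℕ) : deriv^[j] (fun x : ℝ => l * y x) =
    fun x => l * deriv^[j] y x := by
  induction j with
  | zero => simp
  | succ j ih =>
    rw [Function.iterate_succ_apply', ih, Function.iterate_succ_apply']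
    funext x
    rw [deriv_const_mul_field]

theorem aux_shift (c : ℝ) (y : ℝ → ℝ) (j : ℕ) : deriv^[j] (fun x : ℝ => y (x + c)) =
    fun x => deriv^[j] y (x + c) := by
  induction j with
  | zero => simp
  | succ j ih =>
    rw [Function.iterate_succ_apply', ih, Function.iterate_succ_apply']
    funext x
    rw [deriv_comp_add_const]

theorem aux_add (N : ℕ) (y : ℝ → ℝ) (I : Set ℝ) (hI : IsOpen I)
    (hy : ∀ x ∈ I, ∀ j < N, DifferentiableAt ℝ (deriv^[j] y) x) (c : ℝ) (a : ℕ) (j : ℕ)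
    (hj : j ≤ N) : ∀ x ∈ I, deriv^[j] (fun x : ℝ => y x + c * x ^ a) x =
    deriv^[j] y x + c * ((a.descFactorial j : ℝ) * x ^ (a - j)) := by
  induction j with
  | zero => simp
  | succ j ih =>
    intro x hx
    have ih' := ih (by omega)
    have h1 : deriv^[j] (fun x : ℝ => y x + c * x ^ a) =ᶠ[nhds x]
        (fun x => deriv^[j] y x + c * ((a.descFactorial j : ℝ) * x ^ (a - j))) := by
      filter_upwards [hI.mem_nhds hx] with z hz using ih' z hz
    rw [Function.iterate_succ_apply', h1.deriv_eq, Function.iterate_succ_apply',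
      deriv_fun_add (hy x hx j (by omega)) (by fun_prop)]
    congr 1
    have := congrFun (aux_pow c a (j+1)) x
    rw [Function.iterate_succ_apply', aux_pow] at this
    exact this

theorem uniqueness_of_invariant_equation_maximal_symmetry
    (N : ℕ) (hN : 3 ≤ N) (f : ℝ × (Fin N → ℝ) → ℝ)
    (hexist : ∀ x₀ : ℝ, ∀ u : Fin N → ℝ, ∃ I : Set ℝ, ∃ y : ℝ → ℝ,
      IsOpenInterval I ∧ x₀ ∈ I ∧ IsSolutionN N f y I ∧
      ∀ j : Fin N, deriv^[(j : ℕ)] y x₀ = u j)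
    (hinv : ∀ I : Set ℝ, ∀ y : ℝ → ℝ, IsOpenInterval I → IsSolutionN N f y I →
      (∀ c : ℝ, ∀ a : ℕ, a ≤ N - 1 →
        IsSolutionN N f (fun x => y x + c * x ^ a) I) ∧
      (∀ c : ℝ, IsSolutionN N f (fun x => y (x + c)) {x : ℝ | x + c ∈ I}) ∧
      (∀ l : ℝ, l ≠ 0 → IsSolutionN N f (fun x => l * y x) I)) :
    ∀ (x : ℝ) (u : Fin N → ℝ), f (x, u) = 0 := by
  intro x u
  obtain ⟨I, y, hI, hx, hy, hu⟩ := hexist x u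
  have hz := (hinv I y hI hy).2.1 x
  have hJ : IsOpenInterval {t : ℝ | t + x ∈ I} := by
    refine ⟨hI.1.preimage (by fun_prop), ⟨fun p hp q hq r hr => ?_⟩⟩
    exact hI.2.out hp hq ⟨by linarith [hr.1], by linarith [hr.2]⟩
  have h0 : (0 : ℝ) ∈ {t : ℝ | t + x ∈ I} := by simpa using hx
  have hD : deriv^[N] (fun t => y (t + x)) 0 = f (x, u) := by
    rw [aux_shift]
    simp only [zero_add]
    rw [hy.2 x hx]
    congr 2
    funext j
    exact hu j
  generalize (fun t => y (t + x)) = z at hz hD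
  generalize {t : ℝ | t + x ∈ I} = J at hz hJ h0
  have key : ∀ k ≤ N, ∃ w : ℝ → ℝ, IsSolutionN N f w J ∧ deriv^[N] w 0 = f (x, u) ∧
      ∀ j < k, deriv^[j] w 0 = 0 := by
    intro k
    induction k with
    | zero => exact fun _ => ⟨z, hz, hD, by simp⟩
    | succ k ih =>
      intro hk
      obtain ⟨w, hw, hwN, hw0⟩ := ih (by omega)
      have hadd := aux_add N w J hJ.1 hw.1 (-(deriv^[k] w 0) / (k.factorial : ℝ)) k
      refine ⟨_, (hinv J w hJ hw).1 (-(deriv^[k] w 0) / (k.factorial : ℝ)) k (by omega), ?_, ?_⟩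
      · rw [hadd N le_rfl 0 h0, hwN, Nat.descFactorial_of_lt (by omega)]
        simp
      · intro j hj
        rw [hadd j (by omega) 0 h0]
        rcases Nat.lt_succ_iff_lt_or_eq.1 hj with h | h
        · rw [hw0 j h, zero_pow (by omega)]
          simp
        · subst h
          have : (j.factorial : ℝ) ≠ 0 := by positivity
          rw [Nat.descFactorial_self]
          field_simp
          simp
  obtain ⟨w, hw, hwN, hw0⟩ := key N le_rfl
  have e1 := hw.2 0 h0
  have e2 := ((hinv J w hJ hw).2.2 2 two_ne_zero).2 0 h0
  simp only [aux_smul] at e2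
  have e3 : (fun j : Fin N => deriv^[(j : ℕ)] w 0) = fun _ => 0 :=
    funext fun j => hw0 j j.2
  have e4 : (fun j : Fin N => 2 * deriv^[(j : ℕ)] w 0) = fun _ => 0 :=
    funext fun j => by rw [hw0 j j.2, mul_zero]
  rw [e3] at e1
  rw [e4] at e2
  linarith
end

section
/- Let φ : ℝ → ℝ be three times differentiable with φ''(x) ≠ 0 for all x, and let F : ℝ × ℝ³ → ℝ. Assume: (existence of local solutions with arbitrary initial data) for every x₀ ∈ ℝ and every (u₀,u₁,u₂) ∈ ℝ³ there is an open interval I containing x₀ and a solution y on I with y(x₀)=u₀, y'(x₀)=u₁, y''(x₀)=u₂; (invariance of the solution set) whenever y is a solution on an open interval I, then for every c ∈ ℝ the functions x ↦ y(x)+c, x ↦ y(x)+c·x and x ↦ y(x)+c·φ(x) are solutions on I, and for every λ ≠ 0 the function x ↦ λ·y(x) is a solution on I. Then F(x, u₀, u₁, u₂) = (φ'''(x)/φ''(x))·u₂ for all x, u₀, u₁, u₂, i.e. the equation is y''' = (φ'''/φ'')·y''. (This is the uniqueness-of-invariant-hypersurface part of Theorem 4.1: y''' = (φ'''/φ'')y''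 is the only third-order equation invariant under the algebra ⟨∂_y, x∂_y, y∂_y, φ(x)∂_y⟩.) -/
/-- `y` is a solution of `y''' = F(x, y, y', y'')` on the set `I`. -/
def IsSolution3 (F : ℝ → ℝ → ℝ → ℝ → ℝ) (y : ℝ → ℝ) (I : Set ℝ) : Prop :=
  (∀ x ∈ I, DifferentiableAt ℝ y x ∧ DifferentiableAt ℝ (deriv y) x ∧
    DifferentiableAt ℝ (deriv^[2] y) x) ∧
  ∀ x ∈ I, deriv^[3] y x = F x (y x) (deriv y x) (deriv^[2] y x)

lemma step_aux {I : Set ℝ} (hI : IsOpen I) {f g : ℝ → ℝ} (c : ℝ) (h h' : ℝ → ℝ)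
    (hh : ∀ x ∈ I, h x = f x + c * g x)
    (hh' : h' = deriv h)
    (hf : ∀ x ∈ I, DifferentiableAt ℝ f x) (hg : ∀ x ∈ I, DifferentiableAt ℝ g x) :
    ∀ x ∈ I, h' x = deriv f x + c * deriv g x := by
  intro x hx
  have e : h =ᶠ[nhds x] fun x => f x + c * g x := by
    filter_upwards [hI.mem_nhds hx] with z hz using hh z hz
  rw [hh', e.deriv_eq]
  exact ((hf x hx).hasDerivAt.add ((hg x hx).hasDerivAt.const_mul c)).deriv

lemma comb_aux {I : Set ℝ} (hI : IsOpen I) {y g : ℝ → ℝ} (c : ℝ)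
    (hy : ∀ x ∈ I, DifferentiableAt ℝ y x ∧ DifferentiableAt ℝ (deriv y) x ∧
      DifferentiableAt ℝ (deriv^[2] y) x)
    (hg : ∀ x ∈ I, DifferentiableAt ℝ g x ∧ DifferentiableAt ℝ (deriv g) x ∧
      DifferentiableAt ℝ (deriv^[2] g) x) (x : ℝ) (hx : x ∈ I) :
    deriv (fun x => y x + c * g x) x = deriv y x + c * deriv g x ∧
    deriv^[2] (fun x => y x + c * g x) x = deriv^[2] y x + c * deriv^[2] g x ∧
    deriv^[3] (fun x => y x + c * g x) x = deriv^[3] y x + c * deriv^[3] g x := by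
  have h1 := step_aux hI c (fun x => y x + c * g x) _ (fun _ _ => rfl) rfl
    (fun x hx => (hy x hx).1) (fun x hx => (hg x hx).1)
  have h2 := step_aux hI c _ _ h1 rfl
    (fun x hx => (hy x hx).2.1) (fun x hx => (hg x hx).2.1)
  have h3 := step_aux (f := deriv^[2] y) (g := deriv^[2] g) hI c _ _ h2 rfl
    (fun x hx => (hy x hx).2.2) (fun x hx => (hg x hx).2.2)
  exact ⟨h1 x hx, h2 x hx, h3 x hx⟩

theorem uniqueness_of_invariant_equation_dim4
    (φ : ℝ → ℝ)
    (hφ : ∀ x : ℝ, DifferentiableAt ℝ φ x ∧ DifferentiableAt ℝ (deriv φ) x ∧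
      DifferentiableAt ℝ (deriv^[2] φ) x)
    (hφ'' : ∀ x : ℝ, deriv^[2] φ x ≠ 0)
    (F : ℝ → ℝ → ℝ → ℝ → ℝ)
    (hexist : ∀ x₀ u₀ u₁ u₂ : ℝ, ∃ I : Set ℝ, ∃ y : ℝ → ℝ,
      IsOpenInterval I ∧ x₀ ∈ I ∧ IsSolution3 F y I ∧
      y x₀ = u₀ ∧ deriv y x₀ = u₁ ∧ deriv^[2] y x₀ = u₂)
    (hinv : ∀ I : Set ℝ, ∀ y : ℝ → ℝ, IsOpenInterval I → IsSolution3 F y I →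
      (∀ c : ℝ, IsSolution3 F (fun x => y x + c) I) ∧
      (∀ c : ℝ, IsSolution3 F (fun x => y x + c * x) I) ∧
      (∀ c : ℝ, IsSolution3 F (fun x => y x + c * φ x) I) ∧
      (∀ l : ℝ, l ≠ 0 → IsSolution3 F (fun x => l * y x) I)) :
    ∀ x u₀ u₁ u₂ : ℝ, F x u₀ u₁ u₂ = (deriv^[3] φ x / deriv^[2] φ x) * u₂ := by
  intro x u₀ u₁ u₂
  obtain ⟨I, y, hI, hx, hy, y0, y1, y2⟩ := hexist x 0 0 0
  have hF0 : deriv^[3] y x = 0 := by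
    have h2 := (hinv I y hI hy).2.2.2 2 two_ne_zero
    have e : (fun x => 2 * y x) = fun x => y x + 1 * y x := by funext z; ring
    rw [e] at h2
    obtain ⟨a, b, d⟩ := comb_aux hI.1 1 hy.1 hy.1 x hx
    have E := h2.2 x hx
    have E0 := hy.2 x hx
    rw [a, b, d] at E
    simp only [y0, y1, y2, mul_zero, add_zero] at E E0
    linarith
  have hp := hφ'' x
  obtain ⟨a, b, d⟩ := comb_aux hI.1 (u₂ / deriv^[2] φ x) hy.1 (fun z _ => hφ z) x hx
  have hz := (hinv I y hI hy).2.2.1 (u₂ / deriv^[2] φ x)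
  have z2 : deriv^[2] (fun t => y t + u₂ / deriv^[2] φ x * φ t) x = u₂ := by
    rw [b, y2]; field_simp; ring
  have z3 : deriv^[3] (fun t => y t + u₂ / deriv^[2] φ x * φ t) x
      = (deriv^[3] φ x / deriv^[2] φ x) * u₂ := by
    rw [d, hF0]; field_simp; ring
  generalize (fun t => y t + u₂ / deriv^[2] φ x * φ t) = z at hz z2 z3
  have d1 : deriv (fun t : ℝ => t) = fun _ => 1 := by funext t; simp
  have d2 : deriv (fun _ : ℝ => (1 : ℝ)) = fun _ => 0 := by funext t; simp
  have d3 : deriv (fun _ : ℝ => (0 : ℝ)) = fun _ => 0 := by funext t; simp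
  have hw := (hinv I z hI hz).2.1 (u₁ - deriv z x)
  obtain ⟨a', b', d'⟩ := comb_aux (g := fun t => t) hI.1 (u₁ - deriv z x) hz.1
    (fun t _ => by simp [d1, d2]) x hx
  simp only [Function.iterate_succ, Function.iterate_zero, Function.comp, id, d1, d2, d3] at a' b' d' z2 z3
  generalize (fun t => z t + (u₁ - deriv z x) * t) = w at hw a' b' d'
  have hv := (hinv I w hI hw).1 (u₀ - w x)
  obtain ⟨a'', b'', d''⟩ := comb_aux (g := fun _ => 1) hI.1 (u₀ - w x) hw.1
    (fun t _ => by simp [d2]) x hx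
  have E := hv.2 x hx
  simp only [Function.iterate_succ, Function.iterate_zero, Function.comp, id, d1, d2, d3, mul_one, mul_zero, add_zero] at a' b' d' a'' b'' d'' E ⊢
  rw [a'', b'', d'', a', b', d', z2, z3] at E
  simp only [add_sub_cancel] at E
  exact E.symm
end

section
/- Let λ, μ be nonzero real numbers with λ ≠ μ, and let F : ℝ × ℝ³ → ℝ. Assume: (existence of local solutions with arbitrary initial data) for every x₀ ∈ ℝ and every (u₀,u₁,u₂) ∈ ℝ³ there is an open interval I containing x₀ and a solution y on I with y(x₀)=u₀, y'(x₀)=u₁, y''(x₀)=u₂; (invariance of the solution set) whenever y is a solution on an open interval I, then for every c ∈ ℝ the functions x ↦ y(x)+c, x ↦ y(x)+c·e^{λx} and x ↦ y(x)+c·e^{μx} are solutions on I, for every c ∈ ℝ the function x ↦ y(x+c) is a solution on I − c, and for every κ ≠ 0 the function x ↦ κ·y(x) is a solution on I. Then F(x, u₀, u₁, u₂) = (λ+μ)·u₂ − λμ·u₁ for all x, u₀, u₁, u₂, i.e. the equation is y''' − (λ+μ)y'' + λμ y' = 0. (This is the uniqueness-of-invariant-hypersurface part of Theorem 4.2.)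 -/
theorem aux_step (f : ℝ → ℝ) (x a c : ℝ) (h : DifferentiableAt ℝ f x) :
    deriv (fun x => f x + c * Real.exp (a * x)) x = deriv f x + c * a * Real.exp (a * x) := by
  have h1 : HasDerivAt (fun x : ℝ => a * x) a x := by
    simpa using (hasDerivAt_id x).const_mul a
  have h2 := (h.hasDerivAt.add ((h1.exp).const_mul c)).deriv
  refine Eq.trans h2 ?_
  ring

theorem aux_exp (F : ℝ → ℝ → ℝ → ℝ → ℝ) (y : ℝ → ℝ) (I : Set ℝ) (hI : IsOpen I)
    (h : IsSolution3 F y I) (a c x : ℝ) (hx : x ∈ I) :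
    deriv (fun x => y x + c * Real.exp (a * x)) x = deriv y x + c * a * Real.exp (a * x) ∧
    deriv^[2] (fun x => y x + c * Real.exp (a * x)) x
      = deriv^[2] y x + c * a * a * Real.exp (a * x) ∧
    deriv^[3] (fun x => y x + c * Real.exp (a * x)) x
      = deriv^[3] y x + c * a * a * a * Real.exp (a * x) := by
  have e1 : ∀ x ∈ I, deriv (fun x => y x + c * Real.exp (a * x)) x
      = deriv y x + c * a * Real.exp (a * x) := fun x hx => aux_step y x a c (h.1 x hx).1
  have e2 : ∀ x ∈ I, deriv^[2] (fun x => y x + c * Real.exp (a * x)) x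
      = deriv^[2] y x + c * a * a * Real.exp (a * x) := by
    intro x hx
    have := (Filter.eventuallyEq_of_mem (hI.mem_nhds hx) e1).deriv_eq
    exact this.trans (aux_step (deriv y) x a (c * a) (h.1 x hx).2.1)
  have e3 : ∀ x ∈ I, deriv^[3] (fun x => y x + c * Real.exp (a * x)) x
      = deriv^[3] y x + c * a * a * a * Real.exp (a * x) := by
    intro x hx
    have := (Filter.eventuallyEq_of_mem (hI.mem_nhds hx) e2).deriv_eq
    simp only [Function.iterate_succ_apply'] at this ⊢
    exact this.trans (aux_step (deriv^[2] y) x a (c * a * a) (h.1 x hx).2.2)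
  exact ⟨e1 x hx, e2 x hx, e3 x hx⟩

theorem uniqueness_of_invariant_equation_dim5_real_distinct
    (lam mu : ℝ) (hlam : lam ≠ 0) (hmu : mu ≠ 0) (hne : lam ≠ mu)
    (F : ℝ → ℝ → ℝ → ℝ → ℝ)
    (hexist : ∀ x₀ u₀ u₁ u₂ : ℝ, ∃ I : Set ℝ, ∃ y : ℝ → ℝ,
      IsOpenInterval I ∧ x₀ ∈ I ∧ IsSolution3 F y I ∧
      y x₀ = u₀ ∧ deriv y x₀ = u₁ ∧ deriv^[2] y x₀ = u₂)
    (hinv : ∀ I : Set ℝ, ∀ y : ℝ → ℝ, IsOpenInterval I → IsSolution3 F y I →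
      (∀ c : ℝ, IsSolution3 F (fun x => y x + c) I) ∧
      (∀ c : ℝ, IsSolution3 F (fun x => y x + c * Real.exp (lam * x)) I) ∧
      (∀ c : ℝ, IsSolution3 F (fun x => y x + c * Real.exp (mu * x)) I) ∧
      (∀ c : ℝ, IsSolution3 F (fun x => y (x + c)) {x : ℝ | x + c ∈ I}) ∧
      (∀ κ : ℝ, κ ≠ 0 → IsSolution3 F (fun x => κ * y x) I)) :
    ∀ x u₀ u₁ u₂ : ℝ, F x u₀ u₁ u₂ = (lam + mu) * u₂ - lam * mu * u₁ := by
  intro x u₀ u₁ u₂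
  have hd : mu - lam ≠ 0 := sub_ne_zero.mpr (Ne.symm hne)
  obtain ⟨A, B, hA, hB⟩ : ∃ A B : ℝ, lam * A + mu * B = u₁ ∧
      lam * lam * A + mu * mu * B = u₂ := by
    refine ⟨(mu * u₁ - u₂) / (lam * (mu - lam)), (u₂ - lam * u₁) / (mu * (mu - lam)), ?_, ?_⟩
    · field_simp
      ring
    · field_simp
      ring
  obtain ⟨I', w, hI', hx', hw, w0, w1, w2⟩ := hexist x 0 0 0
  have z0 : F x 0 0 0 = 0 := by
    have hs := ((hinv I' w hI' hw).2.2.2.2 2 two_ne_zero).2 x hx'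
    have hs' := hw.2 x hx'
    rw [w0, w1, w2] at hs'
    have q : ∀ f : ℝ → ℝ, deriv (fun x => 2 * f x) = fun x => 2 * deriv f x := by
      intro f
      funext t
      exact deriv_const_mul_field (2 : ℝ)
    simp only [Function.iterate_succ_apply', Function.iterate_zero, id, q] at hs hs' w2
    rw [w0, w1, w2, hs'] at hs
    simp only [mul_zero] at hs
    linarith
  -- shift the zero-data solution by a constant and two exponentials
  have s0' := (hinv I' w hI' hw).1 (u₀ - A - B)
  have t0 : IsSolution3 F (fun x => w x + (u₀ - A - B) * Real.exp (0 * x)) I' := by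
    simpa using s0'
  have d0 := aux_exp F w I' hI'.1 hw 0 (u₀ - A - B) x hx'
  set v := fun x => w x + (u₀ - A - B) * Real.exp (0 * x) with hv
  have v0 : v x = u₀ - A - B := by simp [hv, w0]
  have t1 := (hinv I' v hI' t0).2.1 (A * Real.exp (-(lam * x)))
  have d1 := aux_exp F v I' hI'.1 t0 lam (A * Real.exp (-(lam * x))) x hx'
  set v1 := fun t => v t + A * Real.exp (-(lam * x)) * Real.exp (lam * t) with hv1
  have eL : Real.exp (-(lam * x)) * Real.exp (lam * x) = 1 := by
    rw [← Real.exp_add]; simp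
  have eM : Real.exp (-(mu * x)) * Real.exp (mu * x) = 1 := by
    rw [← Real.exp_add]; simp
  have t2 := (hinv I' v1 hI' t1).2.2.1 (B * Real.exp (-(mu * x)))
  have d2 := aux_exp F v1 I' hI'.1 t1 mu (B * Real.exp (-(mu * x))) x hx'
  have k := t2.2 x hx'
  have k0 := hw.2 x hx'
  rw [w0, w1, w2, z0] at k0
  have g0 : v1 x + B * Real.exp (-(mu * x)) * Real.exp (mu * x) = u₀ := by
    simp only [hv1]
    rw [v0]
    linear_combination A * eL + B * eM
  rw [d2.1, d2.2.1, d2.2.2, d1.1, d1.2.1, d1.2.2, d0.1, d0.2.1, d0.2.2, w1, w2, k0] at k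
  beta_reduce at k
  rw [g0] at k
  have g1 : 0 + (u₀ - A - B) * 0 * Real.exp (0 * x)
      + A * Real.exp (-(lam * x)) * lam * Real.exp (lam * x)
      + B * Real.exp (-(mu * x)) * mu * Real.exp (mu * x) = u₁ := by
    linear_combination A * lam * eL + B * mu * eM + hA
  have g2 : 0 + (u₀ - A - B) * 0 * 0 * Real.exp (0 * x)
      + A * Real.exp (-(lam * x)) * lam * lam * Real.exp (lam * x)
      + B * Real.exp (-(mu * x)) * mu * mu * Real.exp (mu * x) = u₂ := by
    linear_combination A * lam * lam * eL + B * mu * mu * eM + hB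
  rw [g1, g2] at k
  rw [← k]
  linear_combination A * lam ^ 3 * eL + B * mu ^ 3 * eM + (lam + mu) * hB - lam * mu * hA
end

section
/- Let a, b be real numbers with b ≠ 0, and let F : ℝ × ℝ³ → ℝ. Assume: (existence of local solutions with arbitrary initial data) for every x₀ ∈ ℝ and every (u₀,u₁,u₂) ∈ ℝ³ there is an open interval I containing x₀ and a solution y on I with y(x₀)=u₀, y'(x₀)=u₁, y''(x₀)=u₂; (invariance of the solution set) whenever y is a solution on an open interval I, then for every c ∈ ℝ the functions x ↦ y(x)+c, x ↦ y(x)+c·e^{ax}·cos(bx) and x ↦ y(x)+c·e^{ax}·sin(bx) are solutions on I, for every c ∈ ℝ the function x ↦ y(x+c) is a solution on I − c, and for every κ ≠ 0 the function x ↦ κ·y(x) is a solution on I. Then F(x, u₀, u₁, u₂) = 2a·u₂ − (a²+b²)·u₁ for all x, u₀, u₁, u₂, i.e. the equation is y''' − 2a y'' + (a²+b²) y' = 0. (This is the complex-eigenvalue case of Remark 4.3, with symmetry algebra ⟨∂_x, y∂_y, ∂_y, e^{ax}cos(bx)∂_y, e^{ax}sin(bx)∂_y⟩.) -/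
theorem aux_deriv (a b p q x : ℝ) :
    HasDerivAt (fun x => Real.exp (a * x) * (p * Real.cos (b * x) + q * Real.sin (b * x)))
      (Real.exp (a * x) * ((a * p + b * q) * Real.cos (b * x) + (a * q - b * p) * Real.sin (b * x)))
      x := by
  have ha : HasDerivAt (fun x : ℝ => a * x) a x := by simpa using (hasDerivAt_id x).const_mul a
  have hb : HasDerivAt (fun x : ℝ => b * x) b x := by simpa using (hasDerivAt_id x).const_mul b
  refine (ha.exp.mul ((hb.cos.const_mul p).add (hb.sin.const_mul q))).congr_deriv ?_
  simp only [Pi.add_apply]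
  ring

theorem aux_shift_s3 (F : ℝ → ℝ → ℝ → ℝ → ℝ) (I : Set ℝ) (hI : IsOpen I) (y g g1 g2 g3 : ℝ → ℝ)
    (hy : IsSolution3 F y I) (hz : IsSolution3 F (fun x => y x + g x) I)
    (h1 : ∀ x, HasDerivAt g (g1 x) x) (h2 : ∀ x, HasDerivAt g1 (g2 x) x)
    (h3 : ∀ x, HasDerivAt g2 (g3 x) x) (x : ℝ) (hx : x ∈ I) :
    F x (y x + g x) (deriv y x + g1 x) (deriv^[2] y x + g2 x)
      = F x (y x) (deriv y x) (deriv^[2] y x) + g3 x := by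
  have e1 : ∀ x ∈ I, deriv (fun x => y x + g x) x = deriv y x + g1 x := fun x hx =>
    ((hy.1 x hx).1.hasDerivAt.add (h1 x)).deriv
  have e2 : ∀ x ∈ I, deriv^[2] (fun x => y x + g x) x = deriv^[2] y x + g2 x := by
    intro x hx
    have : deriv (fun x => y x + g x) =ᶠ[nhds x] fun x => deriv y x + g1 x :=
      Filter.eventuallyEq_of_mem (hI.mem_nhds hx) e1
    exact this.deriv_eq.trans ((hy.1 x hx).2.1.hasDerivAt.add (h2 x)).deriv
  have e3 : deriv^[3] (fun x => y x + g x) x = deriv^[3] y x + g3 x := by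
    have : deriv^[2] (fun x => y x + g x) =ᶠ[nhds x] fun x => deriv^[2] y x + g2 x :=
      Filter.eventuallyEq_of_mem (hI.mem_nhds hx) e2
    have h := this.deriv_eq.trans ((hy.1 x hx).2.2.hasDerivAt.add (h3 x)).deriv
    exact h
  have := hz.2 x hx
  rw [e3, e2 x hx, e1 x hx, hy.2 x hx] at this
  exact this.symm

theorem uniqueness_of_invariant_equation_dim5_complex
    (a b : ℝ) (hb : b ≠ 0)
    (F : ℝ → ℝ → ℝ → ℝ → ℝ)
    (hexist : ∀ x₀ u₀ u₁ u₂ : ℝ, ∃ I : Set ℝ, ∃ y : ℝ → ℝ,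
      IsOpenInterval I ∧ x₀ ∈ I ∧ IsSolution3 F y I ∧
      y x₀ = u₀ ∧ deriv y x₀ = u₁ ∧ deriv^[2] y x₀ = u₂)
    (hinv : ∀ I : Set ℝ, ∀ y : ℝ → ℝ, IsOpenInterval I → IsSolution3 F y I →
      (∀ c : ℝ, IsSolution3 F (fun x => y x + c) I) ∧
      (∀ c : ℝ, IsSolution3 F (fun x => y x + c * Real.exp (a * x) * Real.cos (b * x)) I) ∧
      (∀ c : ℝ, IsSolution3 F (fun x => y x + c * Real.exp (a * x) * Real.sin (b * x)) I) ∧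
      (∀ c : ℝ, IsSolution3 F (fun x => y (x + c)) {x : ℝ | x + c ∈ I}) ∧
      (∀ κ : ℝ, κ ≠ 0 → IsSolution3 F (fun x => κ * y x) I)) :
    ∀ x u₀ u₁ u₂ : ℝ, F x u₀ u₁ u₂ = 2 * a * u₂ - (a ^ 2 + b ^ 2) * u₁ := by
  have hc : ∀ x u₀ u₁ u₂ c, F x (u₀ + c) u₁ u₂ = F x u₀ u₁ u₂ := by
    intro x u₀ u₁ u₂ c
    obtain ⟨I, y, hI, hx, hy, rfl, rfl, rfl⟩ := hexist x u₀ u₁ u₂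
    have := aux_shift_s3 F I hI.1 y (fun _ => c) (fun _ => 0) (fun _ => 0) (fun _ => 0) hy
      ((hinv I y hI hy).1 c) (fun x => hasDerivAt_const x c) (fun x => hasDerivAt_const x 0)
      (fun x => hasDerivAt_const x 0) x hx
    simpa using this
  have hcos : ∀ x u₀ u₁ u₂ c, F x (u₀ + c * (Real.exp (a * x) * Real.cos (b * x)))
      (u₁ + c * (Real.exp (a * x) * (a * Real.cos (b * x) - b * Real.sin (b * x))))
      (u₂ + c * (Real.exp (a * x) * ((a^2-b^2) * Real.cos (b * x) - 2 * a * b * Real.sin (b * x))))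
      = F x u₀ u₁ u₂ + c * (Real.exp (a * x) * ((a^3 - 3*a*b^2) * Real.cos (b * x)
        + (b^3 - 3*a^2*b) * Real.sin (b * x))) := by
    intro x u₀ u₁ u₂ c
    obtain ⟨I, y, hI, hx, hy, rfl, rfl, rfl⟩ := hexist x u₀ u₁ u₂
    have hz := (hinv I y hI hy).2.1 c
    have := aux_shift_s3 F I hI.1 y _ _ _ _ hy
      (by convert hz using 3; rw [show ∀ e k s : ℝ, c * e * k = e * (c * k + 0 * s) by intros; ring])
      (aux_deriv a b c 0) (aux_deriv a b _ _) (aux_deriv a b _ _) x hx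
    convert this using 2 <;> ring
  have hsin : ∀ x u₀ u₁ u₂ c, F x (u₀ + c * (Real.exp (a * x) * Real.sin (b * x)))
      (u₁ + c * (Real.exp (a * x) * (a * Real.sin (b * x) + b * Real.cos (b * x))))
      (u₂ + c * (Real.exp (a * x) * ((a^2-b^2) * Real.sin (b * x) + 2 * a * b * Real.cos (b * x))))
      = F x u₀ u₁ u₂ + c * (Real.exp (a * x) * ((a^3 - 3*a*b^2) * Real.sin (b * x)
        - (b^3 - 3*a^2*b) * Real.cos (b * x))) := by
    intro x u₀ u₁ u₂ c
    obtain ⟨I, y, hI, hx, hy, rfl, rfl, rfl⟩ := hexist x u₀ u₁ u₂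
    have hz := (hinv I y hI hy).2.2.1 c
    have := aux_shift_s3 F I hI.1 y _ _ _ _ hy
      (by convert hz using 3; rw [show ∀ e k s : ℝ, c * e * s = e * (0 * k + c * s) by intros; ring])
      (aux_deriv a b 0 c) (aux_deriv a b _ _) (aux_deriv a b _ _) x hx
    convert this using 2 <;> ring
  have h0 : ∀ x, F x 0 0 0 = 0 := by
    intro x
    obtain ⟨I, y, hI, hx, hy, h0, h1, h2⟩ := hexist x 0 0 0
    have hz := ((hinv I y hI hy).2.2.2.2 2 two_ne_zero).2 x hx
    have d : ∀ f : ℝ → ℝ, deriv (fun x => 2 * f x) = fun x => 2 * deriv f x := by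
      intro f; funext x; exact deriv_const_mul_field 2
    have hy3 := hy.2 x hx
    simp only [Function.iterate_succ, Function.iterate_zero, Function.comp, id] at hz hy3 h2
    simp only [d] at hz
    rw [hy3, h0, h1, h2] at hz
    simp only [mul_zero] at hz
    linarith
  intro x u₀ u₁ u₂
  have hcs := Real.sin_sq_add_cos_sq (b * x)
  have hE := (Real.exp_pos (a * x)).ne'
  generalize hEe : Real.exp (a * x) = E at *
  generalize hKe : Real.cos (b * x) = K at *
  generalize hSe : Real.sin (b * x) = S at *
  have hN : a ^ 2 + b ^ 2 ≠ 0 := by positivity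
  have hcos' := hcos x
  have hsin' := hsin x
  rw [hEe, hKe, hSe] at hcos' hsin'
  -- Cramer solution
  obtain ⟨c, s, hu1, hu2⟩ : ∃ c s : ℝ,
      c * (E * (a * K - b * S)) + s * (E * (a * S + b * K)) = u₁ ∧
      c * (E * ((a^2-b^2) * K - 2 * a * b * S)) + s * (E * ((a^2-b^2) * S + 2 * a * b * K)) = u₂ := by
    refine ⟨(u₁ * ((a^2-b^2) * S + 2 * a * b * K) - u₂ * (a * S + b * K)) / (E * (b * (a^2+b^2))),
      (u₂ * (a * K - b * S) - u₁ * ((a^2-b^2) * K - 2 * a * b * S)) / (E * (b * (a^2+b^2))), ?_, ?_⟩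
    · field_simp
      linear_combination (u₁ * b * (a^2+b^2)) * hcs
    · field_simp
      linear_combination (u₂ * b * (a^2+b^2)) * hcs
  have r1 := hcos' 0 0 0 c
  have r2 := hsin' (0 + c * (E * K)) (0 + c * (E * (a * K - b * S)))
    (0 + c * (E * ((a^2-b^2) * K - 2 * a * b * S))) s
  rw [r1, h0, zero_add, zero_add, zero_add, hu1, hu2] at r2
  have r3 := hc x (c * (E * K) + s * (E * S)) u₁ u₂ (u₀ - (c * (E * K) + s * (E * S)))
  rw [add_sub_cancel, r2] at r3
  rw [r3, ← hu1, ← hu2]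
  ring
end

section
/- Let λ be a nonzero real number and let F : ℝ × ℝ³ → ℝ. Assume: (existence of local solutions with arbitrary initial data) for every x₀ ∈ ℝ and every (u₀,u₁,u₂) ∈ ℝ³ there is an open interval I containing x₀ and a solution y on I with y(x₀)=u₀, y'(x₀)=u₁, y''(x₀)=u₂; (invariance of the solution set) whenever y is a solution on an open interval I, then for every c ∈ ℝ the functions x ↦ y(x)+c, x ↦ y(x)+c·e^{λx} and x ↦ y(x)+c·x·e^{λx} are solutions on I, for every c ∈ ℝ the function x ↦ y(x+c) is a solution on I − c, and for every κ ≠ 0 the function x ↦ κ·y(x) is a solution on I. Then F(x, u₀, u₁, u₂) = 2λ·u₂ − λ²·u₁ for all x, u₀, u₁, u₂, i.e. the equation is y''' − 2λ y'' + λ² y' = 0. (This is the repeated-eigenvalue case of Remark 4.3, with symmetry algebra ⟨∂_x, y∂_y, ∂_y, e^{λx}∂_y, xe^{λx}∂_y⟩.) -/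
theorem add_aux (F : ℝ → ℝ → ℝ → ℝ → ℝ)
    (hexist : ∀ x₀ u₀ u₁ u₂ : ℝ, ∃ I : Set ℝ, ∃ y : ℝ → ℝ,
      IsOpenInterval I ∧ x₀ ∈ I ∧ IsSolution3 F y I ∧
      y x₀ = u₀ ∧ deriv y x₀ = u₁ ∧ deriv^[2] y x₀ = u₂)
    (g0 g1 g2 g3 : ℝ → ℝ) (h0 : ∀ x, HasDerivAt g0 (g1 x) x)
    (h1 : ∀ x, HasDerivAt g1 (g2 x) x) (h2 : ∀ x, HasDerivAt g2 (g3 x) x)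
    (h : ∀ I : Set ℝ, ∀ y : ℝ → ℝ, IsOpenInterval I → IsSolution3 F y I →
      IsSolution3 F (fun x => y x + g0 x) I) (x u₀ u₁ u₂ : ℝ) :
    F x (u₀ + g0 x) (u₁ + g1 x) (u₂ + g2 x) = F x u₀ u₁ u₂ + g3 x := by
  obtain ⟨I, y, hI, hx, hy, rfl, rfl, rfl⟩ := hexist x u₀ u₁ u₂
  have hz := (h I y hI hy).2 x hx
  have hy3 := hy.2 x hx
  have e1 : ∀ t ∈ I, deriv (fun x => y x + g0 x) t = deriv y t + g1 t := fun t ht =>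
    ((hy.1 t ht).1.hasDerivAt.add (h0 t)).deriv
  have e2 : ∀ t ∈ I, deriv^[2] (fun x => y x + g0 x) t = deriv^[2] y t + g2 t := by
    intro t ht
    have he : deriv (fun x => y x + g0 x) =ᶠ[nhds t] fun t => deriv y t + g1 t :=
      Filter.eventuallyEq_of_mem (hI.1.mem_nhds ht) e1
    exact he.deriv_eq.trans ((hy.1 t ht).2.1.hasDerivAt.add (h1 t)).deriv
  have e3 : deriv^[3] (fun x => y x + g0 x) x = deriv^[3] y x + g3 x := by
    have he : deriv^[2] (fun x => y x + g0 x) =ᶠ[nhds x] fun t => deriv^[2] y t + g2 t :=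
      Filter.eventuallyEq_of_mem (hI.1.mem_nhds hx) e2
    exact he.deriv_eq.trans ((hy.1 x hx).2.2.hasDerivAt.add (h2 x)).deriv
  rw [e3, e2 x hx, e1 x hx, hy3] at hz
  exact hz.symm

theorem uniqueness_of_invariant_equation_dim5_repeated
    (lam : ℝ) (hlam : lam ≠ 0)
    (F : ℝ → ℝ → ℝ → ℝ → ℝ)
    (hexist : ∀ x₀ u₀ u₁ u₂ : ℝ, ∃ I : Set ℝ, ∃ y : ℝ → ℝ,
      IsOpenInterval I ∧ x₀ ∈ I ∧ IsSolution3 F y I ∧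
      y x₀ = u₀ ∧ deriv y x₀ = u₁ ∧ deriv^[2] y x₀ = u₂)
    (hinv : ∀ I : Set ℝ, ∀ y : ℝ → ℝ, IsOpenInterval I → IsSolution3 F y I →
      (∀ c : ℝ, IsSolution3 F (fun x => y x + c) I) ∧
      (∀ c : ℝ, IsSolution3 F (fun x => y x + c * Real.exp (lam * x)) I) ∧
      (∀ c : ℝ, IsSolution3 F (fun x => y x + c * x * Real.exp (lam * x)) I) ∧
      (∀ c : ℝ, IsSolution3 F (fun x => y (x + c)) {x : ℝ | x + c ∈ I}) ∧
      (∀ κ : ℝ, κ ≠ 0 → IsSolution3 F (fun x => κ * y x) I)) :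
    ∀ x u₀ u₁ u₂ : ℝ, F x u₀ u₁ u₂ = 2 * lam * u₂ - lam ^ 2 * u₁ := by
  have hE : ∀ x, HasDerivAt (fun x => Real.exp (lam * x)) (lam * Real.exp (lam * x)) x := by
    intro x
    have := ((hasDerivAt_id x).const_mul lam).exp
    simpa [mul_comm] using this
  have hA : ∀ a b x : ℝ, HasDerivAt (fun x => (a + b * x) * Real.exp (lam * x))
      ((b + lam * a + lam * b * x) * Real.exp (lam * x)) x := by
    intro a b x
    have := (((hasDerivAt_id x).const_mul b).const_add a).mul (hE x)
    refine this.congr_deriv ?_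
    simp only [id]
    ring
  have s1 := fun c => add_aux F hexist (fun _ => c) (fun _ => 0) (fun _ => 0) (fun _ => 0)
    (fun x => hasDerivAt_const x c) (fun x => hasDerivAt_const x 0)
    (fun x => hasDerivAt_const x 0) (fun I y hI hy => (hinv I y hI hy).1 c)
  have s2 := fun a b h => add_aux F hexist _ _ _ _ (hA a b) (hA _ _) (hA _ _) h
  have s3 : ∀ x, F x 0 0 0 = 0 := by
    intro x
    obtain ⟨I, y, hI, hx, hy, y0, y1, y2⟩ := hexist x 0 0 0
    have h2 := ((hinv I y hI hy).2.2.2.2 2 two_ne_zero).2 x hx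
    have h1 := hy.2 x hx
    have d : ∀ f : ℝ → ℝ, deriv (fun x => 2 * f x) = fun x => 2 * deriv f x := by
      intro f
      ext t
      exact deriv_const_mul_field 2
    simp only [Function.iterate_succ, Function.iterate_zero, Function.comp_apply, id, d]
      at h1 h2 y2
    simp only [y0, y1, y2, mul_zero] at h1 h2
    linarith
  intro x u₀ u₁ u₂
  have hEx : Real.exp (lam * x) ≠ 0 := (Real.exp_pos _).ne'
  obtain ⟨A, hAd⟩ : ∃ A, A = (lam * u₁ - u₂) / lam := ⟨_, rfl⟩
  obtain ⟨B, hBd⟩ : ∃ B, B = -(u₁ + A * (1 + lam * x)) / lam := ⟨_, rfl⟩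
  have hA1 : lam * A = lam * u₁ - u₂ := by rw [hAd]; field_simp
  have hB1 : lam * B = -(u₁ + A * (1 + lam * x)) := by rw [hBd]; field_simp
  have t := s2 (B / Real.exp (lam * x)) (A / Real.exp (lam * x)) (by
    intro I y hI hy
    have := (hinv _ _ hI ((hinv I y hI hy).2.1 (B / Real.exp (lam * x)))).2.2.1
      (A / Real.exp (lam * x))
    convert this using 2
    ring) x u₀ u₁ u₂
  have r := s1 (-(u₀ + (B + A * x))) x (u₀ + (B + A * x)) 0 0
  simp only [add_neg_cancel, add_zero, s3] at r
  have c0 : u₀ + (B / Real.exp (lam * x) + A / Real.exp (lam * x) * x) * Real.exp (lam * x)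
      = u₀ + (B + A * x) := by field_simp
  have c1 : u₁ + (A / Real.exp (lam * x) + lam * (B / Real.exp (lam * x))
      + lam * (A / Real.exp (lam * x)) * x) * Real.exp (lam * x) = 0 := by
    field_simp
    linear_combination hB1
  have c2 : u₂ + (lam * (A / Real.exp (lam * x)) + lam * (A / Real.exp (lam * x)
      + lam * (B / Real.exp (lam * x)))
      + lam * (lam * (A / Real.exp (lam * x))) * x) * Real.exp (lam * x) = 0 := by
    field_simp
    linear_combination lam * hB1 + hA1
  rw [c0, c1, c2, ← r] at t
  field_simp at t
  linear_combination -t - lam ^ 2 * hB1 - 2 * lam * hA1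
end

section
/- Let N ≥ 3 be an integer and consider the N+4 smooth vector fields on ℝ²: X(x,y) = (1, 0), H(x,y) = (−2x, −(N−1)y), Y(x,y) = (−x², −(N−1)xy), W_k(x,y) = (0, x^k) for 0 ≤ k ≤ N−1, and T(x,y) = (0, y). Then: (a) the real linear span of these N+4 vector fields is closed under the Lie bracket of vector fields (hence is a Lie subalgebra of the vector fields on ℝ²); (b) these N+4 vector fields are linearly independent over ℝ, so this Lie algebra has dimension N+4; and (c) the N vector fields W_0, …, W_{N−1} pairwise commute, so their span is an N-dimensional abelian subalgebra. (This is the structure of the symmetry algebra (3.1) of the equation y^{(N)} = 0 described in Section 3, including the N-dimensional abelian subalgebra required by the Mahomed–Leach linearizability criterion.) -/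
open VectorField

lemma aux_span {N : ℕ} {b : Fin N ⊕ Fin 4 → ℝ × ℝ → ℝ × ℝ} (hd : ∀ i, Differentiable ℝ (b i))
    (hbr : ∀ i j, lieBracket ℝ (b i) (b j) ∈ Submodule.span ℝ (Set.range b)) 
    (v w : ℝ × ℝ → ℝ × ℝ)
    (hv : v ∈ Submodule.span ℝ (Set.range b)) (hw : w ∈ Submodule.span ℝ (Set.range b)) :
      lieBracket ℝ v w ∈ Submodule.span ℝ (Set.range b) := by
  have hdiff : ∀ u ∈ Submodule.span ℝ (Set.range b), Differentiable ℝ u := by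
    intro u hu
    induction hu using Submodule.span_induction with
    | mem x h => obtain ⟨i, rfl⟩ := h; exact hd i
    | zero => exact differentiable_const 0
    | add x y _ _ h1 h2 => exact h1.add h2
    | smul a x _ h => exact h.const_smul a
  induction hv using Submodule.span_induction with
  | mem x h =>
    obtain ⟨i, rfl⟩ := h
    induction hw using Submodule.span_induction with
    | mem x h => obtain ⟨j, rfl⟩ := h; exact hbr i j
    | zero => rw [lieBracket_zero_right]; exact Submodule.zero_mem _
    | add x y hx hy h1 h2 =>
      have : lieBracket ℝ (b i) (x + y) = lieBracket ℝ (b i) x + lieBracket ℝ (b i) y := by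
        funext p; exact lieBracket_add_right (hdiff x hx p) (hdiff y hy p)
      rw [this]; exact Submodule.add_mem _ h1 h2
    | smul a x hx h =>
      have : lieBracket ℝ (b i) (a • x) = a • lieBracket ℝ (b i) x := by
        funext p; exact lieBracket_const_smul_right (hdiff x hx p)
      rw [this]; exact Submodule.smul_mem _ _ h
  | zero => rw [lieBracket_zero_left]; exact Submodule.zero_mem _
  | add x y hx hy h1 h2 =>
    have : lieBracket ℝ (x + y) w = lieBracket ℝ x w + lieBracket ℝ y w := by
      funext p; exact lieBracket_add_left (hdiff x hx p) (hdiff y hy p)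
    rw [this]; exact Submodule.add_mem _ h1 h2
  | smul a x hx h =>
    have : lieBracket ℝ (a • x) w = a • lieBracket ℝ x w := by
      funext p; exact lieBracket_const_smul_left (hdiff x hx p)
    rw [this]; exact Submodule.smul_mem _ _ h

theorem structure_of_symmetry_algebra_of_yN_eq_zero
    (N : ℕ) (hN : 3 ≤ N)
    (X H Y T : ℝ × ℝ → ℝ × ℝ) (W : ℕ → ℝ × ℝ → ℝ × ℝ)
    (hX : X = fun _ => (1, 0))
    (hH : H = fun p => (-2 * p.1, -((N : ℝ) - 1) * p.2))
    (hY : Y = fun p => (-p.1 ^ 2, -((N : ℝ) - 1) * p.1 * p.2))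
    (hW : W = fun k p => (0, p.1 ^ k))
    (hT : T = fun p => (0, p.2))
    (b : Fin N ⊕ Fin 4 → ℝ × ℝ → ℝ × ℝ)
    (hb : b = Sum.elim (fun k : Fin N => W (k : ℕ)) ![X, H, Y, T]) :
    (∀ v w : ℝ × ℝ → ℝ × ℝ,
      v ∈ Submodule.span ℝ (Set.range b) → w ∈ Submodule.span ℝ (Set.range b) →
      lieBracket ℝ v w ∈ Submodule.span ℝ (Set.range b)) ∧
    LinearIndependent ℝ b ∧
    (∀ j k : Fin N, lieBracket ℝ (W (j : ℕ)) (W (k : ℕ)) = 0) := by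
  have f1 : ∀ p : ℝ × ℝ, HasFDerivAt (fun p : ℝ × ℝ => p.1) (ContinuousLinearMap.fst ℝ ℝ ℝ) p :=
    fun p => hasFDerivAt_fst
  have f2 : ∀ p : ℝ × ℝ, HasFDerivAt (fun p : ℝ × ℝ => p.2) (ContinuousLinearMap.snd ℝ ℝ ℝ) p :=
    fun p => hasFDerivAt_snd
  have dX : ∀ p u, fderiv ℝ X p u = 0 := by
    intro p u; rw [hX]; simp
  have dH : ∀ p u, fderiv ℝ H p u = (-2 * u.1, -((N : ℝ) - 1) * u.2) := by
    intro p u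
    have h := ((f1 p).const_mul (-2)).prodMk ((f2 p).const_mul (-((N : ℝ) - 1)))
    rw [hH, h.fderiv]; simp
  have dY : ∀ p u, fderiv ℝ Y p u
      = (-2 * p.1 * u.1, -((N : ℝ) - 1) * (p.2 * u.1 + p.1 * u.2)) := by
    intro p u
    have h := (((f1 p).pow 2).neg).prodMk (((f1 p).const_mul (-((N : ℝ) - 1))).mul (f2 p))
    have h' := h.congr_of_eventuallyEq (f₁ := Y) (Filter.Eventually.of_forall fun q => by simp [hY])
    rw [h'.fderiv]; ext <;> simp <;> ring
  have dT : ∀ p u, fderiv ℝ T p u = (0, u.2) := by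
    intro p u
    have h := (hasFDerivAt_const (0 : ℝ) p).prodMk (f2 p)
    rw [hT, h.fderiv]; simp
  have dW : ∀ k p u, fderiv ℝ (W k) p u = (0, (k : ℝ) * p.1 ^ (k - 1) * u.1) := by
    intro k p u
    have h := (hasFDerivAt_const (0 : ℝ) p).prodMk ((f1 p).pow k)
    have h' := h.congr_of_eventuallyEq (f₁ := (W k)) (Filter.Eventually.of_forall fun q => by simp [hW])
    rw [h'.fderiv]; ext <;> simp
  have hWW : ∀ j k : ℕ, lieBracket ℝ (W j) (W k) = 0 := by
    intro j k
    funext p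
    simp only [lieBracket, dW]
    simp [hW]
  have mW : ∀ k, k < N → W k ∈ Submodule.span ℝ (Set.range b) := fun k hk =>
    Submodule.subset_span ⟨Sum.inl ⟨k, hk⟩, by simp [hb]⟩
  have mX : X ∈ Submodule.span ℝ (Set.range b) :=
    Submodule.subset_span ⟨Sum.inr 0, by simp [hb]⟩
  have mH : H ∈ Submodule.span ℝ (Set.range b) :=
    Submodule.subset_span ⟨Sum.inr 1, by simp [hb]⟩
  have mY : Y ∈ Submodule.span ℝ (Set.range b) :=
    Submodule.subset_span ⟨Sum.inr 2, by simp [hb]⟩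
  have mT : T ∈ Submodule.span ℝ (Set.range b) :=
    Submodule.subset_span ⟨Sum.inr 3, by simp [hb]⟩
  have sw : ∀ V V' : ℝ × ℝ → ℝ × ℝ, lieBracket ℝ V V' ∈ Submodule.span ℝ (Set.range b) →
      lieBracket ℝ V' V ∈ Submodule.span ℝ (Set.range b) := by
    intro V V' h
    have : lieBracket ℝ V' V = - lieBracket ℝ V V' := by
      funext p; exact lieBracket_swap
    rw [this]; exact Submodule.neg_mem _ h
  have self : ∀ V : ℝ × ℝ → ℝ × ℝ, lieBracket ℝ V V ∈ Submodule.span ℝ (Set.range b) := by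
    intro V; rw [lieBracket_self]; exact Submodule.zero_mem _
  have XH : lieBracket ℝ X H ∈ Submodule.span ℝ (Set.range b) := by
    have : lieBracket ℝ X H = (-2 : ℝ) • X := by
      funext p; simp only [lieBracket, dX, dH]; simp [hX]
    rw [this]; exact Submodule.smul_mem _ _ mX
  have XY : lieBracket ℝ X Y ∈ Submodule.span ℝ (Set.range b) := by
    have : lieBracket ℝ X Y = H := by
      funext p; simp only [lieBracket, dX, dY]; simp [hX, hH]
    rw [this]; exact mH
  have XT : lieBracket ℝ X T ∈ Submodule.span ℝ (Set.range b) := by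
    have : lieBracket ℝ X T = 0 := by
      funext p; simp only [lieBracket, dX, dT]; simp [hX]
    rw [this]; exact Submodule.zero_mem _
  have HY : lieBracket ℝ H Y ∈ Submodule.span ℝ (Set.range b) := by
    have : lieBracket ℝ H Y = (-2 : ℝ) • Y := by
      funext p; simp only [lieBracket, dH, dY]
      ext <;> simp [hH, hY] <;> ring
    rw [this]; exact Submodule.smul_mem _ _ mY
  have HT : lieBracket ℝ H T ∈ Submodule.span ℝ (Set.range b) := by
    have : lieBracket ℝ H T = 0 := by
      funext p; simp only [lieBracket, dH, dT]; simp [hH, hT]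
    rw [this]; exact Submodule.zero_mem _
  have YT : lieBracket ℝ Y T ∈ Submodule.span ℝ (Set.range b) := by
    have : lieBracket ℝ Y T = 0 := by
      funext p; simp only [lieBracket, dY, dT]
      ext <;> simp [hY, hT] <;> ring
    rw [this]; exact Submodule.zero_mem _
  have XW : ∀ k, k < N → lieBracket ℝ X (W k) ∈ Submodule.span ℝ (Set.range b) := by
    intro k hk
    have : lieBracket ℝ X (W k) = (k : ℝ) • W (k - 1) := by
      funext p; simp only [lieBracket, dX, dW]; simp [hX, hW]
    rw [this]; exact Submodule.smul_mem _ _ (mW _ (by omega))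
  have HW : ∀ k, k < N → lieBracket ℝ H (W k) ∈ Submodule.span ℝ (Set.range b) := by
    intro k hk
    have : lieBracket ℝ H (W k) = ((N : ℝ) - 1 - 2 * k) • W k := by
      funext p; simp only [lieBracket, dH, dW]
      rcases k with _ | k
      · ext <;> simp [hH, hW]
      · ext <;> simp [hH, hW]
        ring
    rw [this]; exact Submodule.smul_mem _ _ (mW _ hk)
  have YW : ∀ k, k < N → lieBracket ℝ Y (W k) ∈ Submodule.span ℝ (Set.range b) := by
    intro k hk
    have : lieBracket ℝ Y (W k) = ((N : ℝ) - 1 - k) • W (k + 1) := by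
      funext p; simp only [lieBracket, dY, dW]
      rcases k with _ | k
      · ext <;> simp [hY, hW]
        ring
      · ext <;> simp [hY, hW]
        ring
    rw [this]
    by_cases h : k + 1 < N
    · exact Submodule.smul_mem _ _ (mW _ h)
    · have hk' : N = k + 1 := by omega
      have : (N : ℝ) - 1 - k = 0 := by rw [hk']; push_cast; ring
      rw [this, zero_smul]; exact Submodule.zero_mem _
  have TW : ∀ k, k < N → lieBracket ℝ T (W k) ∈ Submodule.span ℝ (Set.range b) := by
    intro k hk
    have : lieBracket ℝ T (W k) = (-1 : ℝ) • W k := by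
      funext p; simp only [lieBracket, dT, dW]
      simp [hT, hW]
    rw [this]; exact Submodule.smul_mem _ _ (mW _ hk)
  have b0 : b (Sum.inr 0) = X := by simp [hb]
  have b1 : b (Sum.inr 1) = H := by simp [hb]
  have b2 : b (Sum.inr 2) = Y := by simp [hb]
  have b3 : b (Sum.inr 3) = T := by simp [hb]
  have bl : ∀ k : Fin N, b (Sum.inl k) = W k := by intro k; simp [hb]
  refine ⟨aux_span ?_ ?_, ?_, fun j k => hWW j k⟩
  · rintro (k | i)
    · rw [bl, hW]; fun_prop
    · fin_cases i
      · change Differentiable ℝ (b (Sum.inr 0)); rw [b0, hX]; fun_prop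
      · change Differentiable ℝ (b (Sum.inr 1)); rw [b1, hH]; fun_prop
      · change Differentiable ℝ (b (Sum.inr 2)); rw [b2, hY]; fun_prop
      · change Differentiable ℝ (b (Sum.inr 3)); rw [b3, hT]; fun_prop
  · have key : ∀ P : (ℝ × ℝ → ℝ × ℝ) → Prop, (∀ k, k < N → P (W k)) → P X → P H → P Y → P T →
        ∀ i, P (b i) := by
      intro P h hx hh hy ht i
      rcases i with k | i
      · rw [bl]; exact h _ k.2
      · fin_cases i
        · change P (b (Sum.inr 0)); rwa [b0]
        · change P (b (Sum.inr 1)); rwa [b1]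
        · change P (b (Sum.inr 2)); rwa [b2]
        · change P (b (Sum.inr 3)); rwa [b3]
    intro i j
    refine key (fun V => lieBracket ℝ V (b j) ∈ Submodule.span ℝ (Set.range b)) ?_ ?_ ?_ ?_ ?_ i
    · intro k hk
      refine key (fun V => lieBracket ℝ (W k) V ∈ Submodule.span ℝ (Set.range b)) ?_
        (sw _ _ (XW k hk)) (sw _ _ (HW k hk)) (sw _ _ (YW k hk)) (sw _ _ (TW k hk)) j
      intro l hl
      simp only [hWW]
      exact Submodule.zero_mem _
    · exact key (fun V => lieBracket ℝ X V ∈ Submodule.span ℝ (Set.range b)) XW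
        (self _) XH XY XT j
    · exact key (fun V => lieBracket ℝ H V ∈ Submodule.span ℝ (Set.range b)) HW
        (sw _ _ XH) (self _) HY HT j
    · exact key (fun V => lieBracket ℝ Y V ∈ Submodule.span ℝ (Set.range b)) YW
        (sw _ _ XY) (sw _ _ HY) (self _) YT j
    · exact key (fun V => lieBracket ℝ T V ∈ Submodule.span ℝ (Set.range b)) TW
        (sw _ _ XT) (sw _ _ HT) (sw _ _ YT) (self _) j
  · rw [Fintype.linearIndependent_iff]
    intro g hg
    have e1 : ∀ x y : ℝ, g (Sum.inr 0) - 2 * x * g (Sum.inr 1) - x ^ 2 * g (Sum.inr 2) = 0 := by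
      intro x y
      have := congrArg Prod.fst (congrFun hg (x, y))
      simp [Fin.sum_univ_four, bl, b0, b1, b2, b3, hX, hH, hY, hT, hW, Prod.fst_sum] at this
      linarith
    have e2 : ∀ x y : ℝ, ∑ k : Fin N, g (Sum.inl k) * x ^ (k : ℕ)
        + (g (Sum.inr 1) * (-((N : ℝ) - 1) * y) + g (Sum.inr 2) * (-((N : ℝ) - 1) * x * y)
        + g (Sum.inr 3) * y) = 0 := by
      intro x y
      have := congrArg Prod.snd (congrFun hg (x, y))
      simp [Fin.sum_univ_four, bl, b0, b1, b2, b3, hX, hH, hY, hT, hW, Prod.snd_sum] at this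
      linarith
    have h0 : g (Sum.inr 0) = 0 := by linarith [e1 0 0]
    have h1 : g (Sum.inr 1) = 0 := by linarith [e1 1 0, e1 (-1) 0]
    have h2 : g (Sum.inr 2) = 0 := by linarith [e1 1 0, e1 (-1) 0]
    simp only [h1, h2, zero_mul, zero_add] at e2
    have h3 : g (Sum.inr 3) = 0 := by linarith [e2 0 0, e2 0 1]
    have hp : (∑ k : Fin N, Polynomial.monomial (k : ℕ) (g (Sum.inl k))) = 0 := by
      apply Polynomial.funext
      intro x
      have := e2 x 0
      simpa [Polynomial.eval_finsetSum] using this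
    rintro (k | i)
    · have := congrArg (fun q => Polynomial.coeff q (k : ℕ)) hp
      simpa [Polynomial.finsetSum_coeff, Polynomial.coeff_monomial, Fin.val_inj] using this
    · fin_cases i
      · exact h0
      · exact h1
      · exact h2
      · exact h3
end

section
/- Let N ≥ 2 be an integer and d = N−1. Let a, b : ℝ² → ℝ be twice continuously differentiable and define the vector fields on ℝ²: X(p) = (1, 0), V(p) = (0, 1), Y(p) = (a(p), b(p)), and H = [X, Y]. Assume [H, X] = 2X, [H, V] = d·V, and that at every point the first component of [Y, V] vanishes (i.e. [Y, V] is everywhere parallel to V). Then for all (x,y) ∈ ℝ²: ∂a/∂y (x,y) = 0, ∂²a/∂x² (x,y) = −2, ∂²b/∂x² (x,y) = 0, and ∂²b/∂x∂y (x,y) = −d. (This is the system of constraints derived in the first step of the proof of part (a) of Theorem 3.4, which forces a(x) = −x² + αx + β and b(x,y) = −d·xy + γx + H(y).) -/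
open VectorField

theorem constraints_on_Y_coefficients
    (N : ℕ) (hN : 2 ≤ N) (d : ℝ) (hd : d = (N : ℝ) - 1)
    (a b : ℝ × ℝ → ℝ) (ha : ContDiff ℝ 2 a) (hb : ContDiff ℝ 2 b)
    (X V Y H : ℝ × ℝ → ℝ × ℝ)
    (hX : X = fun _ => (1, 0))
    (hV : V = fun _ => (0, 1))
    (hY : Y = fun p => (a p, b p))
    (hH : H = lieBracket ℝ X Y)
    (h1 : lieBracket ℝ H X = (2 : ℝ) • X)
    (h2 : lieBracket ℝ H V = d • V)
    (h3 : ∀ p : ℝ × ℝ, (lieBracket ℝ Y V p).1 = 0) :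
    ∀ p : ℝ × ℝ,
      fderiv ℝ a p (0, 1) = 0 ∧
      fderiv ℝ (fun q => fderiv ℝ a q (1, 0)) p (1, 0) = -2 ∧
      fderiv ℝ (fun q => fderiv ℝ b q (1, 0)) p (1, 0) = 0 ∧
      fderiv ℝ (fun q => fderiv ℝ b q (1, 0)) p (0, 1) = -d := by
  have dF : ∀ f : ℝ × ℝ → ℝ, ContDiff ℝ 2 f →
      Differentiable ℝ (fun q => fderiv ℝ f q (1, 0)) := by
    intro f hf
    have h : ContDiff ℝ 1 (fderiv ℝ f) := hf.fderiv_right (by norm_num)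
    exact (h.clm_apply contDiff_const).differentiable (by norm_num)
  have pr : ∀ f g : ℝ × ℝ → ℝ, Differentiable ℝ f → Differentiable ℝ g → ∀ p v,
      fderiv ℝ (fun q => (f q, g q)) p v = (fderiv ℝ f p v, fderiv ℝ g p v) := by
    intro f g hf hg p v
    rw [((hf p).hasFDerivAt.prodMk (hg p).hasFDerivAt).fderiv]
    rfl
  have da := ha.differentiable (by norm_num)
  have db := hb.differentiable (by norm_num)
  have hH' : H = fun q => (fderiv ℝ a q (1, 0), fderiv ℝ b q (1, 0)) := by
    rw [hH, hX, hY]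
    funext q
    rw [lieBracket, pr a b da db]
    simp
  intro p
  have e1 := congrFun h1 p
  have e2 := congrFun h2 p
  have e3 := h3 p
  rw [lieBracket, hH', hX, pr _ _ (dF a ha) (dF b hb)] at e1
  rw [lieBracket, hH', hV, pr _ _ (dF a ha) (dF b hb)] at e2
  rw [lieBracket, hY, hV, pr a b da db] at e3
  simp [Prod.ext_iff] at e1 e2 e3
  exact ⟨e3, by linarith [e1.1], by linarith [e1.2], by linarith [e2.2]⟩
end

section
/- Let λ be a nonzero real number. Let W : ℝ² → ℝ² be a continuously differentiable vector field and define the vector fields X(x,y) = (1,0), V(x,y) = (0,1), and E(x,y) = (0, e^{λx}) on ℝ². Assume [X, W] = 0, [W, V] = −V, and [W, E] = −E. Then there exists β ∈ ℝ such that W(x,y) = (0, y + β) for all (x,y) ∈ ℝ². (This is the determination of the complementary element e₂ = (y+β)∂_y in the proof of Theorem 4.2.) -/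
open VectorField

theorem complementary_element_determination
    (lam : ℝ) (hlam : lam ≠ 0)
    (W : ℝ × ℝ → ℝ × ℝ) (hW : ContDiff ℝ 1 W)
    (X V E : ℝ × ℝ → ℝ × ℝ)
    (hX : X = fun _ => (1, 0))
    (hV : V = fun _ => (0, 1))
    (hE : E = fun p => (0, Real.exp (lam * p.1)))
    (h1 : lieBracket ℝ X W = 0)
    (h2 : lieBracket ℝ W V = -V)
    (h3 : lieBracket ℝ W E = -E) :
    ∃ β : ℝ, ∀ p : ℝ × ℝ, W p = (0, p.2 + β) := by
  have hd : Differentiable ℝ W := hW.differentiable (by norm_num)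
  have a1 : ∀ p, fderiv ℝ W p (1, 0) = 0 := by
    intro p
    have h := congrFun h1 p
    simpa [lieBracket, hX] using h
  have a2 : ∀ p, fderiv ℝ W p (0, 1) = (0, 1) := by
    intro p
    have h := congrFun h2 p
    simp only [lieBracket, hV, Pi.neg_apply] at h
    apply neg_injective
    simpa using h
  have a3 : ∀ p, (W p).1 = 0 := by
    intro p
    have hEd : HasFDerivAt E ((0 : ℝ × ℝ →L[ℝ] ℝ).prod
        (Real.exp (lam * p.1) • (lam • ContinuousLinearMap.fst ℝ ℝ ℝ))) p := by
      rw [hE]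
      exact (hasFDerivAt_const (0 : ℝ) p).prodMk ((hasFDerivAt_fst.const_mul lam).exp)
    have h := congrFun h3 p
    simp only [lieBracket, Pi.neg_apply] at h
    have e : E p = Real.exp (lam * p.1) • ((0 : ℝ), (1 : ℝ)) := by simp [hE]
    rw [hEd.fderiv, e, map_smul, a2] at h
    have h' := congrArg Prod.snd h
    simpa [hlam] using h'
  have hL : ∀ p, HasFDerivAt (fun q => W q - ((ContinuousLinearMap.inr ℝ ℝ ℝ).comp
      (ContinuousLinearMap.snd ℝ ℝ ℝ)) q) (0 : ℝ × ℝ →L[ℝ] ℝ × ℝ) p := by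
    intro p
    have h := (hd p).hasFDerivAt.sub ((ContinuousLinearMap.inr ℝ ℝ ℝ).comp
      (ContinuousLinearMap.snd ℝ ℝ ℝ)).hasFDerivAt (x := p)
    refine h.congr_fderiv ?_
    refine ContinuousLinearMap.ext fun v => ?_
    have hv : v = v.1 • ((1 : ℝ), (0 : ℝ)) + v.2 • ((0 : ℝ), (1 : ℝ)) := by ext <;> simp
    have : fderiv ℝ W p v = (0, v.2) := by
      rw [hv, map_add, map_smul, map_smul, a1, a2]; simp
    simp [this]
  refine ⟨(W 0).2, fun p => ?_⟩
  have hc := is_const_of_fderiv_eq_zero (𝕜 := ℝ) (fun q => (hL q).differentiableAt)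
    (fun q => (hL q).fderiv) p 0
  have hc2 := congrArg Prod.snd hc
  simp at hc2
  ext
  · exact a3 p
  · simp; linarith
end

section
/- Define the smooth vector fields on ℝ²: e₁(x,y) = (0, 1), e₂(x,y) = (x, 0), e₃(x,y) = (e^{−y}, 0), e₄(x,y) = (e^{y/2}·sin(√3·y/2), 0), e₅(x,y) = (e^{y/2}·cos(√3·y/2), 0). Then their Lie brackets satisfy: [e₁, e₃] = −e₃, [e₁, e₄] = (√3/2)·e₅ + (1/2)·e₄, [e₁, e₅] = (1/2)·e₅ − (√3/2)·e₄, [e₂, e₃] = −e₃, [e₂, e₄] = −e₄, [e₂, e₅] = −e₅, and all remaining brackets among the basis vanish: [e₁, e₂] = 0, [e₃, e₄] = [e₃, e₅] = [e₄, e₅] = 0. In particular the span of e₁, …, e₅ is a five-dimensional solvable Lie algebra of vector fields with abelian derived algebra spanned by e₃, e₄, e₅. (These are the commutation relations (5.7) of the symmetry algebra of the ODE y''' = 3y''²/y' + x·y'⁴ verified in Section 5, Class 2a.) -/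
open VectorField

lemma aux_fd (g : ℝ → ℝ) (g' : ℝ) (p v : ℝ × ℝ) (h : HasDerivAt g g' p.2) :
    fderiv ℝ (fun p : ℝ × ℝ => ((g p.2, 0) : ℝ × ℝ)) p v = (g' * v.2, 0) := by
  have h1 : HasFDerivAt (fun p : ℝ × ℝ => g p.2) (g' • ContinuousLinearMap.snd ℝ ℝ ℝ) p :=
    h.comp_hasFDerivAt p hasFDerivAt_snd
  have h2 := h1.prodMk (hasFDerivAt_const (0 : ℝ) p)
  rw [h2.fderiv]
  simp

lemma aux_fd2 (p v : ℝ × ℝ) :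
    fderiv ℝ (fun p : ℝ × ℝ => ((p.1, 0) : ℝ × ℝ)) p v = (v.1, 0) := by
  have h2 := (hasFDerivAt_fst (𝕜 := ℝ) (p := p)).prodMk (hasFDerivAt_const (0 : ℝ) p)
  rw [h2.fderiv]
  simp

lemma aux3 (y : ℝ) : HasDerivAt (fun y : ℝ => Real.exp (-y)) (-Real.exp (-y)) y := by
  simpa using (hasDerivAt_neg y).exp

lemma aux_lin (y : ℝ) : HasDerivAt (fun y : ℝ => Real.sqrt 3 * y / 2) (Real.sqrt 3 / 2) y := by
  simpa using ((hasDerivAt_id y).const_mul (Real.sqrt 3)).div_const 2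

lemma aux4 (y : ℝ) : HasDerivAt (fun y : ℝ => Real.exp (y / 2) * Real.sin (Real.sqrt 3 * y / 2))
    (Real.exp (y / 2) * (1 / 2) * Real.sin (Real.sqrt 3 * y / 2) +
      Real.exp (y / 2) * (Real.cos (Real.sqrt 3 * y / 2) * (Real.sqrt 3 / 2))) y :=
  ((hasDerivAt_id y).div_const 2).exp.mul (aux_lin y).sin

lemma aux5 (y : ℝ) : HasDerivAt (fun y : ℝ => Real.exp (y / 2) * Real.cos (Real.sqrt 3 * y / 2))
    (Real.exp (y / 2) * (1 / 2) * Real.cos (Real.sqrt 3 * y / 2) +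
      Real.exp (y / 2) * (-Real.sin (Real.sqrt 3 * y / 2) * (Real.sqrt 3 / 2))) y :=
  ((hasDerivAt_id y).div_const 2).exp.mul (aux_lin y).cos

theorem commutation_relations_class2a
    (e₁ e₂ e₃ e₄ e₅ : ℝ × ℝ → ℝ × ℝ)
    (h₁ : e₁ = fun _ => (0, 1))
    (h₂ : e₂ = fun p => (p.1, 0))
    (h₃ : e₃ = fun p => (Real.exp (-p.2), 0))
    (h₄ : e₄ = fun p => (Real.exp (p.2 / 2) * Real.sin (Real.sqrt 3 * p.2 / 2), 0))
    (h₅ : e₅ = fun p => (Real.exp (p.2 / 2) * Real.cos (Real.sqrt 3 * p.2 / 2), 0)) :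
    lieBracket ℝ e₁ e₃ = -e₃ ∧
    lieBracket ℝ e₁ e₄ = (Real.sqrt 3 / 2) • e₅ + (1 / 2 : ℝ) • e₄ ∧
    lieBracket ℝ e₁ e₅ = (1 / 2 : ℝ) • e₅ - (Real.sqrt 3 / 2) • e₄ ∧
    lieBracket ℝ e₂ e₃ = -e₃ ∧
    lieBracket ℝ e₂ e₄ = -e₄ ∧
    lieBracket ℝ e₂ e₅ = -e₅ ∧
    lieBracket ℝ e₁ e₂ = 0 ∧
    lieBracket ℝ e₃ e₄ = 0 ∧
    lieBracket ℝ e₃ e₅ = 0 ∧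
    lieBracket ℝ e₄ e₅ = 0 ∧
    LinearIndependent ℝ ![e₁, e₂, e₃, e₄, e₅] := by
  have f1 : ∀ p v, fderiv ℝ e₁ p v = 0 := by intro p v; subst h₁; simp
  have f2 : ∀ p v, fderiv ℝ e₂ p v = (v.1, 0) := by intro p v; subst h₂; exact aux_fd2 p v
  have f3 := fun p v : ℝ × ℝ => aux_fd _ _ p v (aux3 p.2)
  have f4 := fun p v : ℝ × ℝ => aux_fd _ _ p v (aux4 p.2)
  have f5 := fun p v : ℝ × ℝ => aux_fd _ _ p v (aux5 p.2)
  rw [← h₃] at f3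
  rw [← h₄] at f4
  rw [← h₅] at f5
  refine ⟨?_, ?_, ?_, ?_, ?_, ?_, ?_, ?_, ?_, ?_, ?_⟩
  on_goal 11 =>
    rw [Fintype.linearIndependent_iff]
    intro c hc
    have key : ∀ x y : ℝ, (c 1 * x + c 2 * Real.exp (-y)
        + c 3 * (Real.exp (y / 2) * Real.sin (Real.sqrt 3 * y / 2))
        + c 4 * (Real.exp (y / 2) * Real.cos (Real.sqrt 3 * y / 2)) = 0) ∧ c 0 = 0 := by
      intro x y
      have h := congrFun hc (x, y)
      simp [Fin.sum_univ_succ, h₁, h₂, h₃, h₄, h₅] at h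
      refine ⟨?_, h.2⟩
      have := h.1
      linear_combination this
    have s3 : Real.sqrt 3 ≠ 0 := by positivity
    have k0 := (key 0 0).1
    have k1 := (key 1 0).1
    have kp := (key 0 (2 * Real.pi / Real.sqrt 3)).1
    have kh := (key 0 (Real.pi / Real.sqrt 3)).1
    have a1 : Real.sqrt 3 * (2 * Real.pi / Real.sqrt 3) / 2 = Real.pi := by field_simp
    have a2 : Real.sqrt 3 * (Real.pi / Real.sqrt 3) / 2 = Real.pi / 2 := by field_simp
    rw [a1] at kp
    rw [a2] at kh
    simp at k0 k1
    simp only [Real.sin_pi, Real.cos_pi] at kp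
    simp only [Real.sin_pi_div_two, Real.cos_pi_div_two] at kh
    have c1 : c 1 = 0 := by linarith
    have p1 := Real.exp_pos (-(2 * Real.pi / Real.sqrt 3))
    have p2 := Real.exp_pos (2 * Real.pi / Real.sqrt 3 / 2)
    have p3 := Real.exp_pos (Real.pi / Real.sqrt 3 / 2)
    have c2 : c 2 = 0 := by
      have : c 2 * (Real.exp (-(2 * Real.pi / Real.sqrt 3))
          + Real.exp (2 * Real.pi / Real.sqrt 3 / 2)) = 0 := by
        linear_combination kp + Real.exp (2 * Real.pi / Real.sqrt 3 / 2) * k0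
      exact (mul_eq_zero.mp this).resolve_right (by positivity)
    have c4 : c 4 = 0 := by linarith
    have c3 : c 3 = 0 := by
      have : c 3 * Real.exp (Real.pi / Real.sqrt 3 / 2) = 0 := by
        rw [c2] at kh
        linear_combination kh
      exact (mul_eq_zero.mp this).resolve_right p3.ne'
    have c0 := (key 0 0).2
    intro i
    fin_cases i <;> assumption
  all_goals
    funext p
    simp only [lieBracket, f1, f2, f3, f4, f5, Pi.neg_apply, Pi.add_apply, Pi.sub_apply,
      Pi.smul_apply, Pi.zero_apply]
    simp only [h₁, h₂, h₃, h₄, h₅]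
    ext <;> simp <;> try ring
end

section
/- Let I ⊆ ℝ be an open interval with x + 2 ≠ 0 for all x ∈ I, and let y : ℝ → ℝ be three times differentiable on I satisfying the nonlinear third-order ODE (x+2)·y'''(x) = ((x+3) − 3(x+2)·y'(x))·y''(x) − ((x+2)·y'(x) − (x+3))·y'(x)² for all x ∈ I. Then the function u(x) = e^{y(x)} is three times differentiable on I and satisfies the linear ODE (x+2)·u'''(x) = (x+3)·u''(x) for all x ∈ I. (This is the linearization of the Class 1 example (5.1) of Section 5 by the change of dependent variable ỹ = e^{y}, reducing it to the canonical form ỹ''' − ((x+3)/(x+2))·ỹ'' = 0.) -/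
/-- `y` is three times differentiable on `I`. -/
def ThreeDiffOn (y : ℝ → ℝ) (I : Set ℝ) : Prop :=
  ∀ x ∈ I, DifferentiableAt ℝ y x ∧ DifferentiableAt ℝ (deriv y) x ∧
    DifferentiableAt ℝ (deriv^[2] y) x

theorem linearization_class1
    (I : Set ℝ) (hI : IsOpen I ∧ I.OrdConnected)
    (hI2 : ∀ x ∈ I, x + 2 ≠ 0)
    (y : ℝ → ℝ) (hy : ThreeDiffOn y I)
    (hODE : ∀ x ∈ I, (x + 2) * deriv^[3] y x =
      ((x + 3) - 3 * (x + 2) * deriv y x) * deriv^[2] y x -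
        ((x + 2) * deriv y x - (x + 3)) * (deriv y x) ^ 2) :
    ThreeDiffOn (fun x => Real.exp (y x)) I ∧
    ∀ x ∈ I, (x + 2) * deriv^[3] (fun x => Real.exp (y x)) x =
      (x + 3) * deriv^[2] (fun x => Real.exp (y x)) x := by
  have h0 : ∀ x ∈ I, HasDerivAt y (deriv y x) x := fun x hx => (hy x hx).1.hasDerivAt
  have h1 : ∀ x ∈ I, HasDerivAt (deriv y) (deriv^[2] y x) x :=
    fun x hx => (hy x hx).2.1.hasDerivAt
  have h2 : ∀ x ∈ I, HasDerivAt (deriv^[2] y) (deriv^[3] y x) x :=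
    fun x hx => (hy x hx).2.2.hasDerivAt
  have u0 : ∀ x ∈ I, HasDerivAt (fun x => Real.exp (y x)) (Real.exp (y x) * deriv y x) x :=
    fun x hx => (h0 x hx).exp
  have u1 : ∀ x ∈ I, HasDerivAt (deriv (fun x => Real.exp (y x)))
      (Real.exp (y x) * deriv y x * deriv y x + Real.exp (y x) * deriv^[2] y x) x := by
    intro x hx
    refine ((u0 x hx).mul (h1 x hx)).congr_of_eventuallyEq ?_
    filter_upwards [hI.1.mem_nhds hx] with z hz
    exact (u0 z hz).deriv
  have u2 : ∀ x ∈ I, HasDerivAt (deriv^[2] (fun x => Real.exp (y x)))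
      (((Real.exp (y x) * deriv y x) * deriv y x + Real.exp (y x) * deriv^[2] y x) * deriv y x
        + (Real.exp (y x) * deriv y x) * deriv^[2] y x
        + ((Real.exp (y x) * deriv y x) * deriv^[2] y x
          + Real.exp (y x) * deriv^[3] y x)) x := by
    intro x hx
    refine ((((u0 x hx).mul (h1 x hx)).mul (h1 x hx)).add
      ((u0 x hx).mul (h2 x hx))).congr_of_eventuallyEq ?_
    filter_upwards [hI.1.mem_nhds hx] with z hz
    exact (u1 z hz).deriv
  refine ⟨fun x hx => ⟨(u0 x hx).differentiableAt, (u1 x hx).differentiableAt,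
    (u2 x hx).differentiableAt⟩, fun x hx => ?_⟩
  have e2 : deriv^[2] (fun x => Real.exp (y x)) x = _ := (u1 x hx).deriv
  have e3 : deriv^[3] (fun x => Real.exp (y x)) x = _ := (u2 x hx).deriv
  rw [e2, e3]
  linear_combination Real.exp (y x) * hODE x hx
end

section
/- Let I ⊆ ℝ be an open interval with x + 2 ≠ 0 for all x ∈ I, and let y : ℝ → ℝ be three times differentiable on I satisfying (x+2)·y'''(x) = ((x+3) − 3(x+2)·y'(x))·y''(x) − ((x+2)·y'(x) − (x+3))·y'(x)² for all x ∈ I. Let λ > 0 and c ∈ ℝ be such that λ·e^{y(x)} + c > 0 for all x ∈ I. Then the function x ↦ ln(λ·e^{y(x)} + c) is three times differentiable on I and satisfies the same ODE on I. (This verifies that the flows of the symmetry generators ∂_y and e^{−y}∂_y of equation (5.1) map solutions to solutions.) -/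
theorem symmetry_flow_maps_solutions_to_solutions_class1
    (I : Set ℝ) (hI : IsOpen I ∧ I.OrdConnected)
    (hI2 : ∀ x ∈ I, x + 2 ≠ 0)
    (y : ℝ → ℝ) (hy : ThreeDiffOn y I)
    (hODE : ∀ x ∈ I, (x + 2) * deriv^[3] y x =
      ((x + 3) - 3 * (x + 2) * deriv y x) * deriv^[2] y x -
        ((x + 2) * deriv y x - (x + 3)) * (deriv y x) ^ 2)
    (lam c : ℝ) (hlam : 0 < lam)
    (hpos : ∀ x ∈ I, 0 < lam * Real.exp (y x) + c) :
    ThreeDiffOn (fun x => Real.log (lam * Real.exp (y x) + c)) I ∧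
    ∀ x ∈ I, (x + 2) * deriv^[3] (fun x => Real.log (lam * Real.exp (y x) + c)) x =
      ((x + 3) - 3 * (x + 2) * deriv (fun x => Real.log (lam * Real.exp (y x) + c)) x) *
          deriv^[2] (fun x => Real.log (lam * Real.exp (y x) + c)) x -
        ((x + 2) * deriv (fun x => Real.log (lam * Real.exp (y x) + c)) x - (x + 3)) *
          (deriv (fun x => Real.log (lam * Real.exp (y x) + c)) x) ^ 2 := by
  have hE : ∀ x ∈ I, HasDerivAt (fun x => lam * Real.exp (y x)) (lam * Real.exp (y x) * deriv y x) x := by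
    intro x hx
    have h := ((hy x hx).1.hasDerivAt.exp).const_mul lam
    refine HasDerivAt.congr_deriv h ?_
    ring
  have hu : ∀ x ∈ I, HasDerivAt (fun x => lam * Real.exp (y x) + c) (lam * Real.exp (y x) * deriv y x) x :=
    fun x hx => (hE x hx).add_const c
  have hy1 : ∀ x ∈ I, HasDerivAt (deriv y) (deriv^[2] y x) x :=
    fun x hx => (hy x hx).2.1.hasDerivAt
  have hy2 : ∀ x ∈ I, HasDerivAt (deriv^[2] y) (deriv^[3] y x) x :=
    fun x hx => (hy x hx).2.2.hasDerivAt
  have key : ∀ (f g h : ℝ → ℝ), (∀ x ∈ I, f x = g x) → (∀ x ∈ I, HasDerivAt g (h x) x) →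
      ∀ x ∈ I, HasDerivAt f (h x) x := by
    intro f g h hfg hg x hx
    refine (hg x hx).congr_of_eventuallyEq ?_
    filter_upwards [hI.1.mem_nhds hx] with z hz using hfg z hz
  set F : ℝ → ℝ := fun x => Real.log (lam * Real.exp (y x) + c) with hF
  have hz0 : ∀ x ∈ I, HasDerivAt F
      (lam * Real.exp (y x) * deriv y x / (lam * Real.exp (y x) + c)) x :=
    fun x hx => (hu x hx).log (hpos x hx).ne'
  have hz1 : ∀ x ∈ I, HasDerivAt (deriv F) ((fun x =>
      (lam * Real.exp (y x) * (deriv y x ^ 2 + deriv^[2] y x) * (lam * Real.exp (y x) + c)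
        - (lam * Real.exp (y x) * deriv y x) ^ 2) / (lam * Real.exp (y x) + c) ^ 2) x) x := by
    refine key _ _ _ (fun x hx => (hz0 x hx).deriv) ?_
    intro x hx
    have h := ((hE x hx).mul (hy1 x hx)).div (hu x hx) (hpos x hx).ne'
    refine HasDerivAt.congr_deriv h ?_
    try simp only [Pi.mul_apply]
    ring
  have hz2 : ∀ x ∈ I, HasDerivAt (deriv^[2] F) ((fun x =>
      ((lam * Real.exp (y x) * (deriv y x ^ 3 + 3 * deriv y x * deriv^[2] y x + deriv^[3] y x)
          * (lam * Real.exp (y x) + c)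
        - lam * Real.exp (y x) * deriv y x * (lam * Real.exp (y x) * (deriv y x ^ 2 + deriv^[2] y x)))
          * (lam * Real.exp (y x) + c) ^ 2
        - (lam * Real.exp (y x) * (deriv y x ^ 2 + deriv^[2] y x) * (lam * Real.exp (y x) + c)
          - (lam * Real.exp (y x) * deriv y x) ^ 2) *
          (2 * (lam * Real.exp (y x) + c) * (lam * Real.exp (y x) * deriv y x)))
        / ((lam * Real.exp (y x) + c) ^ 2) ^ 2) x) x := by
    refine key _ _ _ (fun x hx => (hz1 x hx).deriv) ?_
    intro x hx
    have h := ((((hE x hx).mul (((hy1 x hx).pow 2).add (hy2 x hx))).mul (hu x hx)).sub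
      (((hE x hx).mul (hy1 x hx)).pow 2)).div ((hu x hx).pow 2) (pow_ne_zero 2 (hpos x hx).ne')
    refine HasDerivAt.congr_deriv h ?_
    try simp only [Pi.mul_apply, Pi.add_apply, Pi.sub_apply, Pi.pow_apply]
    push_cast
    ring
  refine ⟨fun x hx => ⟨(hz0 x hx).differentiableAt, (hz1 x hx).differentiableAt,
    (hz2 x hx).differentiableAt⟩, fun x hx => ?_⟩
  have e1 := (hz0 x hx).deriv
  have e2 : deriv^[2] F x = _ := (hz1 x hx).deriv
  have e3 : deriv^[3] F x = _ := (hz2 x hx).deriv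
  rw [e1, e2, e3]
  have ho := hODE x hx
  have hp := (hpos x hx).ne'
  beta_reduce
  generalize deriv^[3] y x = y3 at *
  generalize deriv^[2] y x = y2 at *
  generalize deriv y x = y1 at *
  generalize hEE : lam * Real.exp (y x) = E at *
  have hc : c = (E + c) - E := by ring
  generalize E + c = u at *
  field_simp
  linear_combination (E * u ^ 2) * ho
end

section
/- Let I ⊆ ℝ be an open interval and let y : ℝ → ℝ be three times differentiable on I with y'(x) ≠ 0 for all x ∈ I, satisfying the nonlinear third-order ODE y'(x)·y'''(x) = 3·y''(x)² + x·y'(x)⁵ for all x ∈ I. Then there exist constants c₀, c₁, c₂ ∈ ℝ such that for all x ∈ I: x = c₀·e^{−y(x)} + e^{y(x)/2}·(c₁·cos(√3·y(x)/2) + c₂·sin(√3·y(x)/2)). (This expresses the linearization of the Class 2a example (5.5) of Section 5: in the coordinates x = e^{−r}v(r), y = r the equation becomes v''' − 3v'' + 3v' = 0, whose general solution yields the stated closed form.) -/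
theorem const_of_hasDeriv_zero (I : Set ℝ) (hI : IsOpen I ∧ I.OrdConnected) (f : ℝ → ℝ)
    (h : ∀ x ∈ I, HasDerivAt f 0 x) : ∃ k : ℝ, ∀ x ∈ I, f x = k := by
  rcases I.eq_empty_or_nonempty with he | ⟨x0, h0⟩
  · exact ⟨0, by simp [he]⟩
  · refine ⟨f x0, fun x hx => ?_⟩
    exact hI.1.is_const_of_deriv_eq_zero hI.2.isPreconnected
      (fun z hz => (h z hz).differentiableAt.differentiableWithinAt)
      (fun z hz => (h z hz).deriv) hx h0

theorem linearization_class2a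
    (I : Set ℝ) (hI : IsOpen I ∧ I.OrdConnected)
    (y : ℝ → ℝ) (hy : ThreeDiffOn y I)
    (hy' : ∀ x ∈ I, deriv y x ≠ 0)
    (hODE : ∀ x ∈ I, deriv y x * deriv^[3] y x =
      3 * (deriv^[2] y x) ^ 2 + x * (deriv y x) ^ 5) :
    ∃ c₀ c₁ c₂ : ℝ, ∀ x ∈ I,
      x = c₀ * Real.exp (-(y x)) +
        Real.exp (y x / 2) *
          (c₁ * Real.cos (Real.sqrt 3 * y x / 2) + c₂ * Real.sin (Real.sqrt 3 * y x / 2)) := by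
  obtain ⟨b, hb⟩ : ∃ b : ℝ → ℝ, b = fun x => (deriv y x)⁻¹ := ⟨_, rfl⟩
  obtain ⟨c, hc⟩ : ∃ c : ℝ → ℝ, c = fun x => -(deriv^[2] y x) / (deriv y x) ^ 3 := ⟨_, rfl⟩
  have dy : ∀ x ∈ I, HasDerivAt y (deriv y x) x := fun x hx => (hy x hx).1.hasDerivAt
  have dp : ∀ x ∈ I, HasDerivAt (deriv y) (deriv^[2] y x) x := fun x hx =>
    (hy x hx).2.1.hasDerivAt
  have dq : ∀ x ∈ I, HasDerivAt (deriv^[2] y) (deriv^[3] y x) x := fun x hx =>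
    (hy x hx).2.2.hasDerivAt
  have pb : ∀ x ∈ I, deriv y x * b x = 1 := fun x hx => by
    rw [hb]; exact mul_inv_cancel₀ (hy' x hx)
  have db : ∀ x ∈ I, HasDerivAt b (deriv y x * c x) x := fun x hx => by
    have h := (dp x hx).inv (hy' x hx)
    have hp := hy' x hx
    rw [hb, hc]
    refine h.congr_deriv ?_
    beta_reduce
    field_simp
  have dc : ∀ x ∈ I, HasDerivAt c (-(deriv y x * x)) x := fun x hx => by
    have hp := hy' x hx
    have h := (dq x hx).neg.div ((dp x hx).pow 3) (pow_ne_zero 3 hp)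
    have ho := hODE x hx
    rw [hc]
    refine h.congr_deriv ?_
    try simp only [Pi.neg_apply, Pi.pow_apply]
    generalize deriv^[3] y x = t at *
    generalize deriv^[2] y x = q at *
    generalize deriv y x = p at *
    have ht : t = (3 * q ^ 2 + x * p ^ 5) / p := by field_simp; linarith
    rw [ht]
    field_simp
    push_cast
    ring
  clear hb hc
  obtain ⟨s, hs⟩ : ∃ s, s = Real.sqrt 3 := ⟨_, rfl⟩
  have ss : s ^ 2 = 3 := by rw [hs]; exact Real.sq_sqrt (by norm_num)
  rw [← hs]
  have dC : ∀ x ∈ I, HasDerivAt (fun x => Real.cos (s * y x / 2))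
      (-Real.sin (s * y x / 2) * (s * deriv y x / 2)) x := fun x hx =>
    (((dy x hx).const_mul s).div_const 2).cos
  have dS : ∀ x ∈ I, HasDerivAt (fun x => Real.sin (s * y x / 2))
      (Real.cos (s * y x / 2) * (s * deriv y x / 2)) x := fun x hx =>
    (((dy x hx).const_mul s).div_const 2).sin
  have dE : ∀ x ∈ I, HasDerivAt (fun x => Real.exp (-(y x / 2)))
      (Real.exp (-(y x / 2)) * (-(deriv y x / 2))) x := fun x hx =>
    ((dy x hx).div_const 2).neg.exp
  have dZ : ∀ x ∈ I, HasDerivAt (fun x => (2 * x + b x - c x) / 3)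
      ((2 * 1 + deriv y x * c x - -(deriv y x * x)) / 3) x := fun x hx =>
    ((((hasDerivAt_id x).const_mul 2).add (db x hx)).sub (dc x hx)).div_const 3
  have dW : ∀ x ∈ I, HasDerivAt (fun x => s / 3 * (b x + c x))
      (s / 3 * (deriv y x * c x + -(deriv y x * x))) x := fun x hx =>
    ((db x hx).add (dc x hx)).const_mul _
  obtain ⟨k0, h0⟩ := const_of_hasDeriv_zero I hI
    (fun x => Real.exp (y x) * (c x - b x + x)) (fun x hx => by
      have h := (dy x hx).exp.mul (((dc x hx).sub (db x hx)).add (hasDerivAt_id x))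
      refine h.congr_deriv ?_
      simp only [Pi.add_apply, Pi.sub_apply, id]
      linear_combination (-Real.exp (y x)) * pb x hx)
  obtain ⟨k1, h1⟩ := const_of_hasDeriv_zero I hI
    (fun x => Real.exp (-(y x / 2)) * ((2 * x + b x - c x) / 3 * Real.cos (s * y x / 2)
      - s / 3 * (b x + c x) * Real.sin (s * y x / 2))) (fun x hx => by
      have h := (dE x hx).mul (((dZ x hx).mul (dC x hx)).sub ((dW x hx).mul (dS x hx)))
      refine h.congr_deriv ?_
      simp only [Pi.mul_apply, Pi.sub_apply]
      generalize Real.cos (s * y x / 2) = C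
      generalize Real.sin (s * y x / 2) = S
      generalize Real.exp (-(y x / 2)) = E
      have := pb x hx
      linear_combination (-2 / 3 * E * C) * pb x hx
        + (-1 / 6 * E * C * deriv y x * (b x + c x)) * ss)
  obtain ⟨k2, h2⟩ := const_of_hasDeriv_zero I hI
    (fun x => Real.exp (-(y x / 2)) * ((2 * x + b x - c x) / 3 * Real.sin (s * y x / 2)
      + s / 3 * (b x + c x) * Real.cos (s * y x / 2))) (fun x hx => by
      have h := (dE x hx).mul (((dZ x hx).mul (dS x hx)).add ((dW x hx).mul (dC x hx)))
      refine h.congr_deriv ?_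
      simp only [Pi.mul_apply, Pi.add_apply]
      generalize Real.cos (s * y x / 2) = C
      generalize Real.sin (s * y x / 2) = S
      generalize Real.exp (-(y x / 2)) = E
      have := pb x hx
      linear_combination (-2 / 3 * E * S) * pb x hx
        + (-1 / 6 * E * S * deriv y x * (b x + c x)) * ss)
  refine ⟨k0 / 3, k1, k2, fun x hx => ?_⟩
  rw [← h0 x hx, ← h1 x hx, ← h2 x hx]
  have e1 : Real.exp (y x) * Real.exp (-(y x)) = 1 := by rw [← Real.exp_add]; simp
  have e2 : Real.exp (y x / 2) * Real.exp (-(y x / 2)) = 1 := by rw [← Real.exp_add]; simp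
  have cs := Real.sin_sq_add_cos_sq (s * y x / 2)
  generalize Real.cos (s * y x / 2) = C at *
  generalize Real.sin (s * y x / 2) = S at *
  generalize Real.exp (-(y x / 2)) = E at *
  generalize Real.exp (y x / 2) = F at *
  linear_combination (-(c x - b x + x) / 3) * e1 - (2 * x + b x - c x) / 3 * e2
    - F * E * (2 * x + b x - c x) / 3 * cs
end

section
/- Let I ⊆ ℝ be an open interval and let y : ℝ → ℝ be three times differentiable on I with y'(x) ≠ 0 for all x ∈ I, satisfying the nonlinear third-order ODE y'(x)·y'''(x) = x·y'(x)⁵ + y'(x)⁴ − y''(x)·y'(x)² + 3·y''(x)² for all x ∈ I. Then there exist constants c₀, c₁, c₂ ∈ ℝ such that for all x ∈ I: x = c₀·e^{−y(x)} + c₁·cos(y(x)) + c₂·sin(y(x)). (This expresses the linearization of the Class 2b example (5.11) of Section 5: in the coordinates x = e^{−r}v(r), y = r the equation becomes v''' − 2v'' + 2v' = 0, whose general solution yields the stated closed form.) -/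
lemma const_aux (I : Set ℝ) (hI : IsOpen I ∧ I.OrdConnected) (f : ℝ → ℝ)
    (hf : ∀ x ∈ I, HasDerivAt f 0 x) : ∃ c : ℝ, ∀ x ∈ I, f x = c := by
  refine hI.1.exists_is_const_of_deriv_eq_zero hI.2.isPreconnected
    (fun x hx => (hf x hx).differentiableAt.differentiableWithinAt)
    (fun x hx => (hf x hx).deriv)

theorem linearization_class2b
    (I : Set ℝ) (hI : IsOpen I ∧ I.OrdConnected)
    (y : ℝ → ℝ) (hy : ThreeDiffOn y I)
    (hy' : ∀ x ∈ I, deriv y x ≠ 0)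
    (hODE : ∀ x ∈ I, deriv y x * deriv^[3] y x =
      x * (deriv y x) ^ 5 + (deriv y x) ^ 4 - deriv^[2] y x * (deriv y x) ^ 2 +
        3 * (deriv^[2] y x) ^ 2) :
    ∃ c₀ c₁ c₂ : ℝ, ∀ x ∈ I,
      x = c₀ * Real.exp (-(y x)) + c₁ * Real.cos (y x) + c₂ * Real.sin (y x) := by
  have h0 : ∀ x ∈ I, HasDerivAt y (deriv y x) x := fun x hx => (hy x hx).1.hasDerivAt
  have h1 : ∀ x ∈ I, HasDerivAt (deriv y) (deriv^[2] y x) x :=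
    fun x hx => (hy x hx).2.1.hasDerivAt
  have h2 : ∀ x ∈ I, HasDerivAt (deriv^[2] y) (deriv^[3] y x) x :=
    fun x hx => (hy x hx).2.2.hasDerivAt
  generalize deriv^[3] y = s at *
  generalize deriv^[2] y = q at *
  generalize deriv y = p at *
  have hA : ∀ x ∈ I, HasDerivAt (fun x => 1 / p x) (-q x / p x ^ 3 * p x) x := by
    intro x hx
    have hp := hy' x hx
    refine ((hasDerivAt_const x (1:ℝ)).div (h1 x hx) hp).congr_deriv ?_
    field_simp
    ring
  have hB : ∀ x ∈ I, HasDerivAt (fun x => -q x / p x ^ 3)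
      (p x * (-x - 1 / p x - (-q x / p x ^ 3))) x := by
    intro x hx
    have hp := hy' x hx
    have hs : s x = (x * p x ^ 5 + p x ^ 4 - q x * p x ^ 2 + 3 * q x ^ 2) / p x := by
      rw [← hODE x hx]; field_simp
    refine ((h2 x hx).neg.div ((h1 x hx).pow 3) (pow_ne_zero 3 hp)).congr_deriv ?_
    rw [hs]
    simp
    field_simp
    ring
  have hX : ∀ x ∈ I, HasDerivAt (fun x : ℝ => x) (1 / p x * p x) x := by
    intro x hx
    have hp := hy' x hx
    refine (hasDerivAt_id x).congr_deriv ?_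
    field_simp
  obtain ⟨A, hAd⟩ : ∃ A : ℝ → ℝ, A = fun x => 1 / p x := ⟨_, rfl⟩
  obtain ⟨B, hBd⟩ : ∃ B : ℝ → ℝ, B = fun x => -q x / p x ^ 3 := ⟨_, rfl⟩
  have hA : ∀ x ∈ I, HasDerivAt A (B x * p x) x := by subst hAd hBd; exact hA
  have hB : ∀ x ∈ I, HasDerivAt B (p x * (-x - A x - B x)) x := by subst hAd hBd; exact hB
  have hX : ∀ x ∈ I, HasDerivAt (fun x : ℝ => x) (A x * p x) x := by subst hAd; exact hX
  obtain ⟨k, hk⟩ := const_aux I hI (fun x => (x + B x) * Real.exp (y x)) (fun x hx =>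
    (((hX x hx).add (hB x hx)).mul (h0 x hx).exp).congr_deriv (by simp; ring))
  obtain ⟨a, ha⟩ := const_aux I hI
    (fun x => (x + A x) * Real.cos (y x) - (A x + B x) * Real.sin (y x)) (fun x hx =>
    ((((hX x hx).add (hA x hx)).mul (h0 x hx).cos).sub
      (((hA x hx).add (hB x hx)).mul (h0 x hx).sin)).congr_deriv (by simp; ring))
  obtain ⟨b, hb⟩ := const_aux I hI
    (fun x => (x + A x) * Real.sin (y x) + (A x + B x) * Real.cos (y x)) (fun x hx =>
    ((((hX x hx).add (hA x hx)).mul (h0 x hx).sin).add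
      (((hA x hx).add (hB x hx)).mul (h0 x hx).cos)).congr_deriv (by simp; ring))
  refine ⟨k / 2, (a - b) / 2, (a + b) / 2, fun x hx => ?_⟩
  have e1 := hk x hx
  have e2 := ha x hx
  have e3 := hb x hx
  have e4 : Real.exp (y x) * Real.exp (-y x) = 1 := by rw [← Real.exp_add]; simp
  have e5 := Real.sin_sq_add_cos_sq (y x)
  rw [← e1, ← e2, ← e3]
  linear_combination (-(x + B x) / 2) * e4 - ((x - B x) / 2) * e5
end

section
/- Let a be a real number with a ≠ −3 and set b = (a² − 3a)/9. Let I ⊆ ℝ be an open interval and let y : ℝ → ℝ be three times differentiable on I with y(x) > 0 for all x ∈ I, satisfying y(x)²·y'''(x) + a·y(x)·y'(x)·y''(x) + b·y'(x)³ = 0 for all x ∈ I. Fix t ∈ ℝ and let J = { X ∈ ℝ : 1 + tX/2 > 0 and X/(1 + tX/2) ∈ I }. Then the function Y(X) = (1 + tX/2)^{6/(a+3)} · y( X/(1 + tX/2) ) is three times differentiable on J, positive on J, and satisfies Y(X)²·Y'''(X) + a·Y(X)·Y'(X)·Y''(X) + b·Y'(X)³ = 0 for all X ∈ J. (This verifies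 that the flow of the projective symmetry generator e₇ = (x²/2)∂_x + (3xy/(a+3))∂_y of equation (5.13) maps solutions to solutions.) -/
theorem flow_aux (t q X : ℝ) (g : ℝ → ℝ) (hs : 0 < 1 + t * X / 2)
    (hg : DifferentiableAt ℝ g (X / (1 + t * X / 2))) :
    HasDerivAt (fun X => (1 + t * X / 2) ^ q * g (X / (1 + t * X / 2)))
      (t / 2 * q * ((1 + t * X / 2) ^ (q - 1) * g (X / (1 + t * X / 2))) +
        (1 + t * X / 2) ^ (q - 2) * deriv g (X / (1 + t * X / 2))) X := by
  have h1 : HasDerivAt (fun X : ℝ => 1 + t * X / 2) (t / 2) X := by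
    have := (((hasDerivAt_id X).const_mul t).div_const 2).const_add 1
    simpa using this
  have h2 := h1.rpow_const (p := q) (Or.inl hs.ne')
  have h3 := (hasDerivAt_id X).div h1 hs.ne'
  have h4 := HasDerivAt.comp X (h₂ := g) hg.hasDerivAt h3
  have h5 := h2.mul h4
  refine h5.congr_deriv ?_
  have e : (1 + t * X / 2) ^ (q - 2) = (1 + t * X / 2) ^ q / (1 + t * X / 2) ^ 2 := by
    rw [Real.rpow_sub hs]; norm_num
  rw [e]
  simp only [Function.comp, id, Pi.div_apply]
  field_simp
  ring

theorem projective_symmetry_flow_maps_solutions_to_solutions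
    (a : ℝ) (ha : a ≠ -3) (b : ℝ) (hb : b = (a ^ 2 - 3 * a) / 9)
    (I : Set ℝ) (hI : IsOpen I ∧ I.OrdConnected)
    (y : ℝ → ℝ) (hy : ThreeDiffOn y I) (hypos : ∀ x ∈ I, 0 < y x)
    (hODE : ∀ x ∈ I, (y x) ^ 2 * deriv^[3] y x +
      a * y x * deriv y x * deriv^[2] y x + b * (deriv y x) ^ 3 = 0)
    (t : ℝ) (J : Set ℝ)
    (hJ : J = {X : ℝ | 0 < 1 + t * X / 2 ∧ X / (1 + t * X / 2) ∈ I})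
    (Y : ℝ → ℝ)
    (hY : Y = fun X => (1 + t * X / 2) ^ (6 / (a + 3)) * y (X / (1 + t * X / 2))) :
    ThreeDiffOn Y J ∧ (∀ X ∈ J, 0 < Y X) ∧
    ∀ X ∈ J, (Y X) ^ 2 * deriv^[3] Y X +
      a * Y X * deriv Y X * deriv^[2] Y X + b * (deriv Y X) ^ 3 = 0 := by
  have ha3 : a + 3 ≠ 0 := fun h => ha (by linarith)
  obtain ⟨hIo, -⟩ := hI
  set p : ℝ := 6 / (a + 3) with hp
  have hmem : ∀ X, X ∈ J ↔ 0 < 1 + t * X / 2 ∧ X / (1 + t * X / 2) ∈ I := by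
    intro X; rw [hJ]; rfl
  have hJn : ∀ X ∈ J, ∀ᶠ Z in nhds X, Z ∈ J := by
    intro X hX
    obtain ⟨h1, h2⟩ := (hmem X).1 hX
    have c1 : ContinuousAt (fun X : ℝ => 1 + t * X / 2) X := by fun_prop
    have c2 : ContinuousAt (fun X : ℝ => X / (1 + t * X / 2)) X :=
      continuousAt_id.div c1 h1.ne'
    filter_upwards [c1.eventually (lt_mem_nhds h1), c2.eventually (hIo.mem_nhds h2)] with Z a1 a2
    exact (hmem Z).2 ⟨a1, a2⟩
  let F : ℝ → (ℝ → ℝ) → ℝ → ℝ := fun q g X => (1 + t * X / 2) ^ q * g (X / (1 + t * X / 2))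
  have hF : ∀ q g X, 0 < 1 + t * X / 2 → DifferentiableAt ℝ g (X / (1 + t * X / 2)) →
      HasDerivAt (F q g) (t / 2 * q * F (q - 1) g X + F (q - 2) (deriv g) X) X :=
    fun q g X h1 h2 => flow_aux t q X g h1 h2
  have d1 : ∀ X ∈ J, HasDerivAt Y (t / 2 * p * F (p - 1) y X + F (p - 2) (deriv y) X) X := by
    intro X hX
    obtain ⟨h1, h2⟩ := (hmem X).1 hX
    rw [hY]
    exact hF p y X h1 (hy _ h2).1
  have d2 : ∀ X ∈ J, HasDerivAt (deriv Y)
      (t / 2 * p * (t / 2 * (p - 1) * F (p - 1 - 1) y X + F (p - 1 - 2) (deriv y) X) +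
        (t / 2 * (p - 2) * F (p - 2 - 1) (deriv y) X + F (p - 2 - 2) (deriv^[2] y) X)) X := by
    intro X hX
    obtain ⟨h1, h2⟩ := (hmem X).1 hX
    obtain ⟨y1, y2, y3⟩ := hy _ h2
    have := ((hF (p - 1) y X h1 y1).const_mul (t / 2 * p)).add (hF (p - 2) (deriv y) X h1 y2)
    refine HasDerivAt.congr_of_eventuallyEq this ?_
    filter_upwards [hJn X hX] with Z hZ
    exact (d1 Z hZ).deriv
  have d3 : ∀ X ∈ J, HasDerivAt (deriv^[2] Y)
      (t / 2 * p * (t / 2 * (p - 1) *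
          (t / 2 * (p - 1 - 1) * F (p - 1 - 1 - 1) y X + F (p - 1 - 1 - 2) (deriv y) X) +
          (t / 2 * (p - 1 - 2) * F (p - 1 - 2 - 1) (deriv y) X +
            F (p - 1 - 2 - 2) (deriv^[2] y) X)) +
        (t / 2 * (p - 2) * (t / 2 * (p - 2 - 1) * F (p - 2 - 1 - 1) (deriv y) X +
            F (p - 2 - 1 - 2) (deriv^[2] y) X) +
          (t / 2 * (p - 2 - 2) * F (p - 2 - 2 - 1) (deriv^[2] y) X +
            F (p - 2 - 2 - 2) (deriv^[3] y) X))) X := by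
    intro X hX
    obtain ⟨h1, h2⟩ := (hmem X).1 hX
    obtain ⟨y1, y2, y3⟩ := hy _ h2
    have := ((((hF (p - 1 - 1) y X h1 y1).const_mul (t / 2 * (p - 1))).add
      (hF (p - 1 - 2) (deriv y) X h1 y2)).const_mul (t / 2 * p)).add
      (((hF (p - 2 - 1) (deriv y) X h1 y2).const_mul (t / 2 * (p - 2))).add
      (hF (p - 2 - 2) (deriv^[2] y) X h1 y3))
    rw [Function.iterate_succ_apply' deriv 2 y]
    refine HasDerivAt.congr_of_eventuallyEq this ?_
    filter_upwards [hJn X hX] with Z hZ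
    exact (d2 Z hZ).deriv
  refine ⟨fun X hX => ⟨(d1 X hX).differentiableAt, (d2 X hX).differentiableAt,
    (d3 X hX).differentiableAt⟩, ?_, ?_⟩
  · intro X hX
    obtain ⟨h1, h2⟩ := (hmem X).1 hX
    rw [hY]
    exact mul_pos (Real.rpow_pos_of_pos h1 _) (hypos _ h2)
  · intro X hX
    obtain ⟨h1, h2⟩ := (hmem X).1 hX
    have ode := hODE _ h2
    have e2 : deriv^[2] Y X = _ := (d2 X hX).deriv
    have e3 : deriv^[3] Y X = _ := (d3 X hX).deriv
    have e0 : Y X = F p y X := by rw [hY]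
    rw [e0, e3, e2, (d1 X hX).deriv]
    simp only [F]
    clear e0 e2 e3 d1 d2 d3 hF F hJn hmem hX hODE h2 hypos hy hJ hY
    generalize y (X / (1 + t * X / 2)) = y0 at *
    generalize deriv y (X / (1 + t * X / 2)) = y1 at *
    generalize deriv^[2] y (X / (1 + t * X / 2)) = y2 at *
    generalize deriv^[3] y (X / (1 + t * X / 2)) = y3 at *
    generalize 1 + t * X / 2 = s at *
    simp only [Real.rpow_sub h1, Real.rpow_one, Real.rpow_two]
    generalize s ^ p = P
    have hy3 : s ≠ 0 := h1.ne'
    have key : p * (a + 3) = 6 := by rw [hp]; field_simp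
    clear_value p
    have hpa : p = 6 / (a + 3) := hp
    subst hb
    subst hpa
    have := congrArg (fun z => P ^ 3 / s ^ 6 * z) ode
    simp only [mul_zero] at this
    rw [← this]
    field_simp
    ring
end
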